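/- Suppose r_i β_i⁺ e^{d_i⁺ r_i} < e for each i = 1,…,m, and suppose the Nicholson system is uniformly persistent at 0: there exists M > 0 such that for every φ ∈ X₊ with φ(0) ≫ 0 there is t₀ with y_i(t,φ) ≥ M for all t ≥ t₀ and all i. Then there exists a function b : ℝ → ℝ^m, with every component almost periodic, with inf_{t∈ℝ} b_i(t) > 0 for each i, which solves the Nicholson system for all t ∈ ℝ, such that every solution with initial value φ ∈ X₊ with φ(0) ≫ 0 converges to it asymptotically: max over i of sup over s ∈ [−r_i,0] of |y_i(t+s,φ) − b_i(t+s)| tends to 0 as t → ∞; moreover b is the unique almost periodic entire solution with all components bounded away from 0. -/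

import Mathlib

open MeasureTheory Filter Topology Set

noncomputable section

namespace Nicholson

/-- An almost periodic function: continuous, with a relatively dense set of
`ε`-periods for every `ε > 0`. -/
def AlmostPeriodic (f : ℝ → ℝ) : Prop :=
  Continuous f ∧ ∀ ε > 0, ∃ L > 0, ∀ a : ℝ, ∃ s ∈ Set.Icc a (a + L),
    ∀ t, |f (t + s) - f t| < ε

/-- The phase space `X = C([-r₁,0]) × ⋯ × C([-r_m,0])` (as plain functions;
continuity is carried by the solutions). -/
abbrev XN (m : ℕ) (r : Fin m → ℝ) := ∀ i : Fin m, Set.Icc (-(r i)) (0:ℝ) → ℝ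

/-- The cone `X₊` of componentwise nonnegative functions. -/
def XPos {m : ℕ} {r : Fin m → ℝ} (φ : XN m r) : Prop := ∀ i s, 0 ≤ φ i s

/-- The point `0 ∈ [-rᵢ,0]`. -/
def pt0N {m : ℕ} (r : Fin m → ℝ) (hr : ∀ i, 0 < r i) (i : Fin m) :
    Set.Icc (-(r i)) (0:ℝ) :=
  ⟨0, Set.mem_Icc.mpr ⟨by linarith [hr i], le_rfl⟩⟩

/-- The point `-rᵢ ∈ [-rᵢ,0]`. -/
def ptnegN {m : ℕ} (r : Fin m → ℝ) (hr : ∀ i, 0 < r i) (i : Fin m) :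
    Set.Icc (-(r i)) (0:ℝ)  :=
  ⟨-(r i), Set.mem_Icc.mpr ⟨le_rfl, by linarith [hr i]⟩⟩

/-- Conditions (a1)-(a6) on the coefficients of the Nicholson system. -/
def NicholsonHyps (m : ℕ) (d : Fin m → ℝ → ℝ) (a : Fin m → Fin m → ℝ → ℝ)
    (β c : Fin m → ℝ → ℝ) : Prop :=
  (∀ i, AlmostPeriodic (d i)) ∧ (∀ i j, AlmostPeriodic (a i j)) ∧
  (∀ i, AlmostPeriodic (β i)) ∧ (∀ i, AlmostPeriodic (c i)) ∧
  (∃ d₀ > 0, ∀ i t, d₀ ≤ d i t) ∧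
  (∀ i j t, 0 ≤ a i j t) ∧ (∀ i t, a i i t = 0) ∧
  (∀ i t, 0 < β i t) ∧
  (∃ c₀ > 0, ∀ i t, c₀ ≤ c i t) ∧
  (∀ i t, 0 < d i t - ∑ j, a j i t)

/-- The right-hand side of the `i`-th Nicholson equation along a function `y`. -/
def rhs {m : ℕ} (d : Fin m → ℝ → ℝ) (a : Fin m → Fin m → ℝ → ℝ) (β c : Fin m → ℝ → ℝ)
    (r : Fin m → ℝ) (i : Fin m) (t : ℝ) (y : ℝ → Fin m → ℝ) : ℝ :=
  -(d i t) * y t i + (∑ j, a i j t * y t j) +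
    β i t * y (t - r i) i * Real.exp (-(c i t * y (t - r i) i))

/-- `y` is the solution of the Nicholson system with initial value `φ ∈ X`. -/
def SolN {m : ℕ} (d : Fin m → ℝ → ℝ) (a : Fin m → Fin m → ℝ → ℝ) (β c : Fin m → ℝ → ℝ)
    (r : Fin m → ℝ) (φ : XN m r) (y : ℝ → Fin m → ℝ) : Prop :=
  (∀ i, ContinuousOn (fun t => y t i) (Set.Ici (-(r i)))) ∧
  (∀ i (s : Set.Icc (-(r i)) (0:ℝ)), y (s : ℝ) i = φ i s) ∧
  ∀ i t, 0 ≤ t → HasDerivWithinAt (fun u => y u i) (rhs d a β c r i t y) (Set.Ici t) t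

/-- `b` is an entire (globally defined) solution of the Nicholson system. -/
def EntireSolN {m : ℕ} (d : Fin m → ℝ → ℝ) (a : Fin m → Fin m → ℝ → ℝ)
    (β c : Fin m → ℝ → ℝ) (r : Fin m → ℝ) (b : ℝ → Fin m → ℝ) : Prop :=
  ∀ i t, HasDerivAt (fun u => b u i) (rhs d a β c r i t b) t

/-- The segment `y_t ∈ X` of `y`. -/
def segN {m : ℕ} (r : Fin m → ℝ) (y : ℝ → Fin m → ℝ) (t : ℝ) : XN m r :=
  fun i s => y (t + (s : ℝ)) i

/-- The exponential order `φ ≤_B ψ` for `B = diag(-μ₁,…,-μ_m)`. -/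
def expLeN {m : ℕ} (μ : Fin m → ℝ) {r : Fin m → ℝ} (φ ψ : XN m r) : Prop :=
  (∀ i s, φ i s ≤ ψ i s) ∧
  ∀ i, ∀ s t : Set.Icc (-(r i)) (0:ℝ), (s : ℝ) ≤ (t : ℝ) →
    (ψ i s - φ i s) * Real.exp (μ i * (s : ℝ)) ≤ (ψ i t - φ i t) * Real.exp (μ i * (t : ℝ))

/-- The zero element of `X`. -/
def zeroN (m : ℕ) (r : Fin m → ℝ) : XN m r := fun _ _ => 0

/-- Extension of the `i`-th component of `φ` to `ℝ` by the projection onto `[-rᵢ,0]`. -/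
def extN {m : ℕ} {r : Fin m → ℝ} (hr : ∀ i, 0 < r i) (φ : XN m r) (i : Fin m) : ℝ → ℝ :=
  fun s => φ i (Set.projIcc (-(r i)) 0 (by linarith [hr i]) s)

/-- `φ ≫_B 0`: `φ` is Lipschitz, `φᵢ(-rᵢ) > 0` and
`ess inf (φᵢ' + μᵢ φᵢ) > 0` on `[-rᵢ,0]` for each `i`. -/
def strPosN {m : ℕ} {r : Fin m → ℝ} (hr : ∀ i, 0 < r i) (μ : Fin m → ℝ)
    (φ : XN m r) : Prop :=
  (∀ i, ∃ K, LipschitzWith K (φ i)) ∧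
  (∀ i, 0 < φ i (ptnegN r hr i)) ∧
  ∀ i, ∃ ε > 0, ∀ᵐ s ∂(volume.restrict (Set.Ioo (-(r i)) (0:ℝ))),
    DifferentiableAt ℝ (extN hr φ i) s ∧
    ε ≤ deriv (extN hr φ i) s + μ i * extN hr φ i s

/-- The Nicholson nonlinearity `fᵢ(t,φ)`. -/
def fN {m : ℕ} (d : Fin m → ℝ → ℝ) (a : Fin m → Fin m → ℝ → ℝ) (β c : Fin m → ℝ → ℝ)
    (r : Fin m → ℝ) (hr : ∀ i, 0 < r i) (i : Fin m) (t : ℝ) (φ : XN m r) : ℝ :=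
  -(d i t) * φ i (pt0N r hr i) + (∑ j, a i j t * φ j (pt0N r hr j)) +
    β i t * φ i (ptnegN r hr i) * Real.exp (-(c i t * φ i (ptnegN r hr i)))

/-- The supremum over `ℝ` of a real function. -/
def supR (f : ℝ → ℝ) : ℝ := sSup (Set.range f)

/-- The exponents `μᵢ = (1/rᵢ) ln(e²/(rᵢ βᵢ⁺))`. -/
def muN {m : ℕ} (r : Fin m → ℝ) (β : Fin m → ℝ → ℝ) (i : Fin m) : ℝ :=
  (1 / r i) * Real.log (Real.exp 2 / (r i * supR (β i)))

end Nicholson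

/-!
Under `r_i β_i⁺ e^{d_i⁺ r_i} < e` the right-hand side is monotone for an exponential ordering, and
`x e^{-cx}` is strictly sublinear. Together they make the ratio of any two solutions with values in
a common interval `[M, K]`, `M > 0`, contract towards `1`, and the contraction survives small errors
in the equation. Shifting one persistent bounded solution by common almost periods of the
coefficients gives such approximate solutions, so the shifts converge, and the limit is an entire
solution. The same contraction, applied to the limit and its own shifts, gives almost periodicity;
applied to the limit and another solution, it gives attraction and uniqueness.
-/

namespace Nicholson

/-! ### Almost periodic functions -/

section AlmostPeriodic

variable {f g : ℝ → ℝ}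

lemma AlmostPeriodic.exists_abs_le (hf : AlmostPeriodic f) : ∃ B, ∀ t, |f t| ≤ B := by
  obtain ⟨L, -, hL⟩ := hf.2 1 one_pos
  obtain ⟨B, hB⟩ := isCompact_Icc.exists_bound_of_continuousOn (s := Icc 0 L) hf.1.continuousOn
  refine ⟨B + 1, fun t => ?_⟩
  obtain ⟨s, hs, hper⟩ := hL (-t)
  have hBs : |f (t + s)| ≤ B := hB (t + s) ⟨by linarith [hs.1], by linarith [hs.2]⟩
  have hshift := hper t
  grind

lemma AlmostPeriodic.uniformContinuous (hf : AlmostPeriodic f) : UniformContinuous f := by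
  rw [Metric.uniformContinuous_iff]
  intro ε hε
  obtain ⟨L, -, hL⟩ := hf.2 (ε / 3) (by positivity)
  obtain ⟨δ, hδ, hcont⟩ := Metric.uniformContinuousOn_iff.1
    (isCompact_Icc.uniformContinuousOn_of_continuous (s := Icc (-1) (L + 1)) hf.1.continuousOn)
    (ε / 3) (by positivity)
  refine ⟨min δ 1, by positivity, fun {t u} htu => ?_⟩
  obtain ⟨s, hs, hper⟩ := hL (-t)
  rw [Real.dist_eq, lt_min_iff] at htu
  have hu := abs_lt.1 htu.2
  have hnear := hcont (t + s) ⟨by linarith [hs.1], by linarith [hs.2]⟩ (u + s)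
    ⟨by linarith [hs.1], by linarith [hs.2]⟩ (by simpa [Real.dist_eq] using htu.1)
  rw [Real.dist_eq] at hnear ⊢
  have ht := hper t
  have hu := hper u
  grind

lemma AlmostPeriodic.exists_finite_coloring (hf : AlmostPeriodic f) {ε : ℝ} (hε : 0 < ε) :
    ∃ (N : ℕ) (color : ℝ → Fin N),
      ∀ s s', color s = color s' → ∀ t, |f (t + s) - f (t + s')| < ε := by
  obtain ⟨L, -, hL⟩ := hf.2 (ε / 4) (by positivity)
  obtain ⟨δ, hδ, hcont⟩ :=
    Metric.uniformContinuous_iff.1 hf.uniformContinuous (ε / 2) (by positivity)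
  choose p hp hper using fun s : ℝ => hL (s - L)
  have hrem : ∀ s, 0 ≤ s - p s ∧ s - p s ≤ L := fun s =>
    ⟨by linarith [(hp s).2], by linarith [(hp s).1]⟩
  have hlt : ∀ s, ⌊(s - p s) / δ⌋₊ < ⌊L / δ⌋₊ + 1 := fun s =>
    Nat.lt_succ_of_le (Nat.floor_le_floor (by gcongr; exact (hrem s).2))
  refine ⟨⌊L / δ⌋₊ + 1, fun s => ⟨⌊(s - p s) / δ⌋₊, hlt s⟩, fun s s' hcolor t => ?_⟩
  have hfloor : ⌊(s - p s) / δ⌋ = ⌊(s' - p s') / δ⌋ := by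
    rw [← Int.natCast_floor_eq_floor (div_nonneg (hrem s).1 hδ.le),
      ← Int.natCast_floor_eq_floor (div_nonneg (hrem s').1 hδ.le), Fin.mk.inj hcolor]
  have hclose : |(s - p s) - (s' - p s')| < δ := by
    have h := Int.abs_sub_lt_one_of_floor_eq_floor hfloor
    rwa [← sub_div, abs_div, abs_of_pos hδ, div_lt_one hδ] at h
  have hnear : |f (t + (s - p s)) - f (t + (s' - p s'))| < ε / 2 :=
    hcont (by rwa [Real.dist_eq, add_sub_add_left_eq_sub])
  have hs := hper s (t + (s - p s))
  have hs' := hper s' (t + (s' - p s'))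
  rw [show t + (s - p s) + p s = t + s by ring] at hs
  rw [show t + (s' - p s') + p s' = t + s' by ring] at hs'
  grind

/- The colors of the translates take finitely many values, so every `s` has the colors of one of
finitely many representatives; the difference of the two is a common almost period. -/
lemma AlmostPeriodic.exists_common_period {ι : Type*} [Finite ι] {f : ι → ℝ → ℝ}
    (hf : ∀ k, AlmostPeriodic (f k)) {ε : ℝ} (hε : 0 < ε) :
    ∃ L > 0, ∀ a : ℝ, ∃ s ∈ Icc a (a + L), ∀ k t, |f k (t + s) - f k t| < ε := by
  choose N color hcolor using fun k => (hf k).exists_finite_coloring hε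
  let colors : ℝ → ∀ k, Fin (N k) := fun s k => color k s
  let rep : ℝ → ℝ := fun s => Function.invFun colors (colors s)
  have hrep : ∀ s, colors (rep s) = colors s := fun s => Function.invFun_eq ⟨s, rfl⟩
  have hfin : (range rep).Finite :=
    (finite_range (Function.invFun colors)).subset
      (range_comp_subset_range colors (Function.invFun colors))
  obtain ⟨B, hB⟩ := hfin.isBounded.exists_norm_le
  have hB : ∀ s, |rep s| ≤ B := fun s => hB _ (mem_range_self s)
  have hB0 : 0 ≤ B := (abs_nonneg _).trans (hB 0)
  refine ⟨2 * B + 1, by positivity, fun a => ?_⟩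
  have hmem := abs_le.1 (hB (a + B))
  refine ⟨a + B - rep (a + B), ⟨by linarith, by linarith⟩, fun k t => ?_⟩
  have h := hcolor k _ _ (congrFun (hrep (a + B)) k).symm (t - rep (a + B))
  rwa [sub_add_cancel, show t - rep (a + B) + (a + B) = t + (a + B - rep (a + B)) by ring] at h

lemma AlmostPeriodic.uniformContinuous_comp₂ (hf : AlmostPeriodic f) (hg : AlmostPeriodic g)
    {F : ℝ × ℝ → ℝ} (hF : UniformContinuous F) : AlmostPeriodic fun t => F (f t, g t) := by
  refine ⟨hF.continuous.comp (hf.1.prodMk hg.1), fun ε hε => ?_⟩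
  obtain ⟨δ, hδ, hFδ⟩ := Metric.uniformContinuous_iff.1 hF ε hε
  obtain ⟨L, hL, hper⟩ :=
    AlmostPeriodic.exists_common_period (f := ![f, g]) (Fin.forall_fin_two.2 ⟨hf, hg⟩) hδ
  refine ⟨L, hL, fun a => ?_⟩
  obtain ⟨s, hs, hclose⟩ := hper a
  exact ⟨s, hs, fun t => hFδ (max_lt (hclose 0 t) (hclose 1 t))⟩

lemma AlmostPeriodic.sub (hf : AlmostPeriodic f) (hg : AlmostPeriodic g) :
    AlmostPeriodic (f - g) :=
  hf.uniformContinuous_comp₂ hg uniformContinuous_sub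

lemma AlmostPeriodic.inf (hf : AlmostPeriodic f) (hg : AlmostPeriodic g) :
    AlmostPeriodic (f ⊓ g) :=
  hf.uniformContinuous_comp₂ hg lipschitzWith_min.uniformContinuous

lemma AlmostPeriodic.sum {ι : Type*} {s : Finset ι} {f : ι → ℝ → ℝ}
    (hf : ∀ i ∈ s, AlmostPeriodic (f i)) : AlmostPeriodic (∑ i ∈ s, f i) :=
  Finset.sum_induction f AlmostPeriodic
    (fun _ _ hf hg => hf.uniformContinuous_comp₂ hg uniformContinuous_add)
    ⟨continuous_const, fun ε hε => ⟨1, one_pos, fun a => ⟨a, by simp, by simpa using hε⟩⟩⟩ hf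

lemma AlmostPeriodic.exists_le_integral (hf : AlmostPeriodic f) (hnonneg : ∀ t, 0 ≤ f t)
    {t₁ : ℝ} (hpos : 0 < f t₁) :
    ∃ L > 0, ∃ κ > 0, ∀ t, κ ≤ ∫ u in t..(t + L), f u := by
  obtain ⟨L, hL, hper⟩ := hf.2 (f t₁ / 3) (by positivity)
  obtain ⟨δ, hδ, hcont⟩ :=
    Metric.uniformContinuous_iff.1 hf.uniformContinuous (f t₁ / 3) (by positivity)
  refine ⟨L + δ, by positivity, δ / 2 * (f t₁ / 3), by positivity, fun t => ?_⟩
  obtain ⟨s, hs, hshift⟩ := hper (t - t₁)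
  have hlow : ∀ u ∈ Icc (t₁ + s) (t₁ + s + δ / 2), f t₁ / 3 ≤ f u := by
    intro u hu
    have hus := hshift (u - s)
    have hu₁ := hcont (a := u - s) (b := t₁)
      (by rw [Real.dist_eq, abs_lt]; constructor <;> linarith [hu.1, hu.2])
    rw [sub_add_cancel] at hus
    rw [Real.dist_eq] at hu₁
    grind
  calc δ / 2 * (f t₁ / 3) = ∫ _ in (t₁ + s)..(t₁ + s + δ / 2), f t₁ / 3 := by simp [mul_div_assoc]
    _ ≤ ∫ u in (t₁ + s)..(t₁ + s + δ / 2), f u :=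
      intervalIntegral.integral_mono_on (by linarith) (by simp) (hf.1.intervalIntegrable _ _) hlow
    _ ≤ ∫ u in t..(t + (L + δ)), f u :=
      intervalIntegral.integral_mono_interval (by linarith [hs.1]) (by linarith)
        (by linarith [hs.2]) (ae_of_all _ hnonneg) (hf.1.intervalIntegrable _ _)

end AlmostPeriodic

/-! ### The Ricker nonlinearity -/

/-- The Ricker function `x ↦ x e^{-cx}`, the birth nonlinearity of the Nicholson system. -/
def ricker (c x : ℝ) : ℝ := x * Real.exp (-(c * x))

section Ricker

variable {c x y : ℝ}

lemma ricker_nonneg (hx : 0 ≤ x) : 0 ≤ ricker c x := by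
  unfold ricker
  positivity

lemma ricker_le_one_div (hc : 0 < c) : ricker c x ≤ 1 / c := by
  have hexp : c * x ≤ Real.exp (c * x) := by linarith [Real.add_one_le_exp (c * x)]
  rw [ricker, le_div_iff₀ hc, Real.exp_neg, mul_right_comm, ← div_eq_mul_inv,
    div_le_one (Real.exp_pos _), mul_comm]
  exact hexp

lemma hasDerivAt_ricker : HasDerivAt (ricker c) ((1 - c * x) * Real.exp (-(c * x))) x := by
  have hexp : HasDerivAt (fun x => -(c * x)) (-c) x := by
    simpa using ((hasDerivAt_id x).const_mul c).fun_neg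
  exact ((hasDerivAt_id x).mul hexp.exp).congr_deriv (by simp only [id]; ring)

/- The slope of `x e^{-cx}` is least at `cx = 2`, where it equals `-e⁻²`. -/
lemma neg_exp_mul_sub_le_ricker_sub (hxy : x ≤ y) :
    -Real.exp (-2) * (y - x) ≤ ricker c y - ricker c x := by
  have hderiv : ∀ z, -Real.exp (-2) ≤ (1 - c * z) * Real.exp (-(c * z)) := fun z => by
    have hsplit : Real.exp (-2) = Real.exp (c * z - 2) * Real.exp (-(c * z)) := by
      rw [← Real.exp_add]
      ring_nf
    rw [hsplit, ← neg_mul]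
    gcongr
    linarith [Real.add_one_le_exp (c * z - 2)]
  exact Convex.mul_sub_le_image_sub_of_le_deriv convex_univ
    (fun _ _ => hasDerivAt_ricker.continuousAt.continuousWithinAt)
    (fun _ _ => hasDerivAt_ricker.differentiableAt.differentiableWithinAt)
    (fun z _ => hasDerivAt_ricker.deriv ▸ hderiv z) x (mem_univ _) y (mem_univ _) hxy

lemma ricker_mul_sub_mul_ricker_ge {l : ℝ} (hl : 0 ≤ l) (hx : 0 ≤ x) :
    l * (1 - l) * (c * x ^ 2 * Real.exp (-(c * x))) ≤ ricker c (l * x) - l * ricker c x := by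
  have hsplit : Real.exp (-(c * (l * x))) =
      Real.exp (-(c * x)) * Real.exp (c * x * (1 - l)) := by
    rw [← Real.exp_add]
    ring_nf
  calc l * (1 - l) * (c * x ^ 2 * Real.exp (-(c * x)))
      = l * x * Real.exp (-(c * x)) * (c * x * (1 - l)) := by ring
    _ ≤ l * x * Real.exp (-(c * x)) * (Real.exp (c * x * (1 - l)) - 1) := by
        gcongr
        linarith [Real.add_one_le_exp (c * x * (1 - l))]
    _ = ricker c (l * x) - l * ricker c x := by
        rw [ricker, ricker, hsplit]
        ring

lemma ricker_mul_sub_mul_ricker_ge_of_bounds {c₀ B M K l : ℝ} (hc₀ : 0 ≤ c₀) (hc : c₀ ≤ c)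
    (hcB : c ≤ B) (hM : 0 ≤ M) (hx : M ≤ x) (hxK : x ≤ K) (hl : 0 ≤ l) (hl1 : l ≤ 1) :
    l * (1 - l) * (c₀ * M ^ 2 * Real.exp (-(B * K))) ≤ ricker c (l * x) - l * ricker c x := by
  refine le_trans ?_ (ricker_mul_sub_mul_ricker_ge hl (hM.trans hx))
  have : 0 ≤ 1 - l := sub_nonneg.2 hl1
  have : 0 ≤ x := hM.trans hx
  have : 0 ≤ c := hc₀.trans hc
  have : 0 ≤ B := this.trans hcB
  gcongr

lemma abs_exp_neg_sub_exp_neg_le (hx : 0 ≤ x) (hy : 0 ≤ y) :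
    |Real.exp (-x) - Real.exp (-y)| ≤ |x - y| := by
  have hlip := (convex_Ici (0 : ℝ)).norm_image_sub_le_of_norm_hasDerivWithin_le (C := 1)
    (f := fun z => Real.exp (-z)) (f' := fun z => -Real.exp (-z))
    (fun z _ => by simpa using ((hasDerivAt_neg z).exp).hasDerivWithinAt)
    (fun z hz => by simpa using hz) hy hx
  simpa using hlip

lemma ricker_le_self (hc : 0 ≤ c) (hx : 0 ≤ x) : ricker c x ≤ x :=
  mul_le_of_le_one_right hx (Real.exp_le_one_iff.2 (neg_nonpos.2 (mul_nonneg hc hx)))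

lemma abs_ricker_sub_ricker_le_abs_sub_mul {c' : ℝ} (hc : 0 ≤ c) (hc' : 0 ≤ c') (hx : 0 ≤ x) :
    |ricker c x - ricker c' x| ≤ x * |(c - c') * x| := by
  rw [ricker, ricker, ← mul_sub, abs_mul, abs_of_nonneg hx, sub_mul]
  exact mul_le_mul_of_nonneg_left
    (abs_exp_neg_sub_exp_neg_le (mul_nonneg hc hx) (mul_nonneg hc' hx)) hx

lemma abs_ricker_sub_ricker_le (hc : 0 ≤ c) (hx : 0 ≤ x) (hy : 0 ≤ y) :
    |ricker c x - ricker c y| ≤ |x - y| := by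
  have hderiv : ∀ z ∈ Ici (0 : ℝ), ‖(1 - c * z) * Real.exp (-(c * z))‖ ≤ 1 := fun z hz => by
    have hcz : 0 ≤ c * z := mul_nonneg hc hz
    have habs : |1 - c * z| ≤ Real.exp (c * z) :=
      abs_le.2 ⟨by linarith [Real.add_one_le_exp (c * z)], by linarith [Real.one_le_exp hcz]⟩
    rw [norm_mul, Real.norm_eq_abs, Real.norm_eq_abs, Real.abs_exp, Real.exp_neg,
      ← div_eq_mul_inv]
    exact (div_le_one (Real.exp_pos _)).2 habs
  simpa using (convex_Ici (0 : ℝ)).norm_image_sub_le_of_norm_hasDerivWithin_le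
    (fun z _ => hasDerivAt_ricker.hasDerivWithinAt) hderiv hy hx

end Ricker

/-! ### Differential inequalities -/

section DifferentialInequalities

lemma exp_mul_add_le_exp_mul {v v' P p Q q : ℝ → ℝ} {s t : ℝ} (hst : s ≤ t)
    (hcont : ContinuousOn v (Icc s t)) (hv : ∀ u ∈ Ioo s t, HasDerivAt v (v' u) u)
    (hP : ∀ u, HasDerivAt P (p u) u) (hQ : ∀ u, HasDerivAt Q (q u) u)
    (hle : ∀ u ∈ Ioo s t, q u ≤ Real.exp (P u) * (v' u + p u * v u)) :
    Real.exp (P s) * v s + (Q t - Q s) ≤ Real.exp (P t) * v t := by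
  have hderiv : ∀ u ∈ Ioo s t, HasDerivAt (fun u => Real.exp (P u) * v u - Q u)
      (Real.exp (P u) * (v' u + p u * v u) - q u) u := fun u hu =>
    (((hP u).exp.mul (hv u hu)).sub (hQ u)).congr_deriv (by ring)
  have hPcont : Continuous P := continuous_iff_continuousAt.2 fun u => (hP u).continuousAt
  have hQcont : Continuous Q := continuous_iff_continuousAt.2 fun u => (hQ u).continuousAt
  have hmono : MonotoneOn (fun u => Real.exp (P u) * v u - Q u) (Icc s t) :=
    monotoneOn_of_hasDerivWithinAt_nonneg (convex_Icc s t)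
      ((hPcont.rexp.continuousOn.mul hcont).sub hQcont.continuousOn)
      (fun u hu => (hderiv u (interior_Icc (α := ℝ) ▸ hu)).hasDerivWithinAt)
      (fun u hu => sub_nonneg.2 (hle u (interior_Icc (α := ℝ) ▸ hu)))
  linarith [hmono (left_mem_Icc.2 hst) (right_mem_Icc.2 hst) hst]

lemma exp_neg_mul_add_le {v v' Q q : ℝ → ℝ} {s t μ : ℝ} (hst : s ≤ t) (hμ : 0 ≤ μ)
    (hv : ∀ u ∈ Icc s t, HasDerivAt v (v' u) u) (hQ : ∀ u, HasDerivAt Q (q u) u)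
    (hq : ∀ u, 0 ≤ q u) (hle : ∀ u ∈ Icc s t, q u ≤ v' u + μ * v u) :
    Real.exp (-(μ * (t - s))) * (v s + (Q t - Q s)) ≤ v t := by
  have hcompare := exp_mul_add_le_exp_mul (P := fun u => μ * (u - s)) (p := fun _ => μ) hst
    (fun u hu => (hv u hu).continuousAt.continuousWithinAt)
    (fun u hu => hv u (Ioo_subset_Icc_self hu))
    (fun u => by simpa using ((hasDerivAt_id u).sub_const s).const_mul μ) hQ fun u hu =>
      (hle u (Ioo_subset_Icc_self hu)).trans <| le_mul_of_one_le_left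
        ((hq u).trans (hle u (Ioo_subset_Icc_self hu)))
        (Real.one_le_exp (mul_nonneg hμ (sub_nonneg.2 hu.1.le)))
  rw [Real.exp_neg, inv_mul_le_iff₀ (Real.exp_pos _)]
  simpa using hcompare

lemma exp_neg_mul_le {v v' : ℝ → ℝ} {s t μ : ℝ} (hst : s ≤ t) (hμ : 0 ≤ μ)
    (hv : ∀ u ∈ Icc s t, HasDerivAt v (v' u) u) (hle : ∀ u ∈ Icc s t, 0 ≤ v' u + μ * v u) :
    Real.exp (-(μ * (t - s))) * v s ≤ v t := by
  simpa using exp_neg_mul_add_le (Q := fun _ => 0) (q := fun _ => 0) hst hμ hv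
    (fun u => hasDerivAt_const u 0) (fun _ => le_rfl) hle

lemma forall_pos_of_forall_nonneg_imp_pos {ι : Type*} [Finite ι] {V : ι → ℝ → ℝ} {s T : ℝ}
    (hcont : ∀ i, ContinuousOn (V i) (Icc s T)) (hs : ∀ i, 0 < V i s)
    (hstep : ∀ t ∈ Icc s T, (∀ i, ∀ u ∈ Icc s t, 0 ≤ V i u) → ∀ i, 0 < V i t) :
    ∀ i, ∀ t ∈ Icc s T, 0 < V i t := by
  by_contra! hbad
  obtain ⟨j, u, hu, hju⟩ := hbad
  have hcompact : IsCompact (⋃ i, Icc s T ∩ V i ⁻¹' Iic 0) :=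
    isCompact_iUnion fun i => isCompact_Icc.of_isClosed_subset
      ((hcont i).preimage_isClosed_of_isClosed isClosed_Icc isClosed_Iic) inter_subset_left
  obtain ⟨t, hmem, hleast⟩ := hcompact.exists_isLeast ⟨u, mem_iUnion.2 ⟨j, hu, hju⟩⟩
  obtain ⟨i, ht, hit⟩ := mem_iUnion.1 hmem
  have hst : s < t := lt_of_le_of_ne ht.1 fun h => (h ▸ hs i).not_ge hit
  have hbefore : ∀ k, ∀ v ∈ Ico s t, 0 ≤ V k v := fun k v hv => by
    by_contra! hneg
    exact hv.2.not_ge (hleast (mem_iUnion.2 ⟨k, ⟨hv.1, hv.2.le.trans ht.2⟩, hneg.le⟩))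
  have hclosure : ∀ k, ∀ v ∈ Icc s t, 0 ≤ V k v := fun k v hv => by
    rw [← closure_Ico hst.ne] at hv
    refine le_on_closure (hbefore k) continuousOn_const ((hcont k).mono ?_) hv
    exact closure_Ico hst.ne ▸ Icc_subset_Icc_right ht.2
  exact (hstep t ht hclosure i).not_ge hit

section LinearDecay

variable {δ S S' : ℝ → ℝ} {C t₀ : ℝ}

lemma le_exp_neg_integral_mul_add (hδ : Continuous δ) (hδ0 : ∀ t, 0 ≤ δ t) (hC : 0 ≤ C)
    (hS : ∀ t, t₀ ≤ t → HasDerivAt S (S' t) t) (hS' : ∀ t, t₀ ≤ t → S' t ≤ -δ t * S t + C)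
    {s t : ℝ} (hs : t₀ ≤ s) (hst : s ≤ t) :
    S t ≤ Real.exp (-∫ u in s..t, δ u) * S s + C * (t - s) := by
  have hint : ∀ x y, IntervalIntegrable δ volume x y := hδ.intervalIntegrable
  have hP : ∀ u, HasDerivAt (fun u => (∫ w in s..u, δ w) - ∫ w in s..t, δ w) (δ u) u := fun u =>
    (intervalIntegral.integral_hasDerivAt_right (hint _ _)
      (hδ.stronglyMeasurableAtFilter _ _) hδ.continuousAt).sub_const _
  have hexp : ∀ u ≤ t, Real.exp ((∫ w in s..u, δ w) - ∫ w in s..t, δ w) ≤ 1 := fun u hu => by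
    rw [Real.exp_le_one_iff, intervalIntegral.integral_interval_sub_left (hint _ _) (hint _ _),
      intervalIntegral.integral_symm, neg_nonpos]
    exact intervalIntegral.integral_nonneg hu fun w _ => hδ0 w
  have hcompare := exp_mul_add_le_exp_mul (v := fun u => -S u) (v' := fun u => -S' u)
    (Q := fun u => -C * u) (q := fun _ => -C) hst
    (fun u hu => (hS u (hs.trans hu.1)).neg.continuousAt.continuousWithinAt)
    (fun u hu => (hS u (hs.trans hu.1.le)).neg) hP
    (fun u => by simpa using (hasDerivAt_id u).const_mul (-C)) fun u hu => by
      have hle := hS' u (hs.trans hu.1.le)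
      calc -C ≤ Real.exp ((∫ w in s..u, δ w) - ∫ w in s..t, δ w) * -C := by
            nlinarith [hexp u hu.2.le]
        _ ≤ _ := by gcongr; linarith
  simp only [intervalIntegral.integral_same, zero_sub, sub_self, Real.exp_zero] at hcompare
  linarith

lemma exists_le_of_deriv_le_neg_mul_add {L κ : ℝ} (hδ : Continuous δ) (hδ0 : ∀ t, 0 ≤ δ t)
    (hC : 0 ≤ C) (hL : 0 < L) (hκ : 0 < κ) (hwindow : ∀ t, κ ≤ ∫ u in t..(t + L), δ u)
    (hS0 : ∀ t, t₀ ≤ t → 0 ≤ S t) (hS : ∀ t, t₀ ≤ t → HasDerivAt S (S' t) t)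
    (hS' : ∀ t, t₀ ≤ t → S' t ≤ -δ t * S t + C) :
    ∃ K, ∀ t, t₀ ≤ t → S t ≤ K := by
  have hq : Real.exp (-κ) < 1 := Real.exp_lt_one_iff.2 (neg_lt_zero.2 hκ)
  set q := Real.exp (-κ)
  set K := max (S t₀ + C * L) (C * L / (1 - q))
  have hK : C * L ≤ K * (1 - q) := (div_le_iff₀ (sub_pos.2 hq)).1 (le_max_right _ _)
  have hfirst : ∀ t ∈ Icc t₀ (t₀ + L), S t ≤ K := fun t ht => by
    have hdecay := le_exp_neg_integral_mul_add hδ hδ0 hC hS hS' le_rfl ht.1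
    have hexp : Real.exp (-∫ u in t₀..t, δ u) ≤ 1 := Real.exp_le_one_iff.2 <| neg_nonpos.2 <|
      intervalIntegral.integral_nonneg ht.1 fun w _ => hδ0 w
    have hone := mul_le_of_le_one_left (hS0 t₀ le_rfl) hexp
    have hCL : C * (t - t₀) ≤ C * L := by gcongr; linarith [ht.2]
    linarith [le_max_left (S t₀ + C * L) (C * L / (1 - q))]
  have hall : ∀ n : ℕ, ∀ t ∈ Icc t₀ (t₀ + n * L), S t ≤ K := fun n => by
    induction n with
    | zero => exact fun t ht => hfirst t ⟨ht.1, ht.2.trans (by simpa using hL.le)⟩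
    | succ n ih =>
      intro t ht
      push_cast at ht
      by_cases htL : t ≤ t₀ + L
      · exact hfirst t ⟨ht.1, htL⟩
      have hprev : t₀ ≤ t - L := by linarith
      have hdecay := le_exp_neg_integral_mul_add hδ hδ0 hC hS hS' hprev (sub_le_self t hL.le)
      have hexp : Real.exp (-∫ u in (t - L)..t, δ u) ≤ q :=
        Real.exp_le_exp.2 (neg_le_neg (by simpa using hwindow (t - L)))
      have hq0 := mul_le_mul hexp (ih (t - L) ⟨hprev, by linarith [ht.2]⟩) (hS0 _ hprev)
        (Real.exp_pos _).le
      rw [sub_sub_cancel] at hdecay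
      linarith
  refine ⟨K, fun t ht => ?_⟩
  obtain ⟨n, hn⟩ := exists_nat_ge ((t - t₀) / L)
  exact hall n t ⟨ht, by linarith [(div_le_iff₀ hL).1 hn]⟩

end LinearDecay

end DifferentialInequalities

/-! ### Causal functional differential equations -/

section Causal

variable {E : Type*} [NormedAddCommGroup E] [NormedSpace ℝ E]

/-- `F` is Lipschitz with constant `K` in the past history: at time `s ≥ 0`, the value `F y s` moves
by at most `K` times the supremum of the perturbation of `y` on `(-∞, s]`. -/
def CausalLipschitz (K : ℝ) (F : (ℝ → E) → ℝ → E) : Prop :=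
  ∀ y z s D, 0 ≤ s → (∀ u ≤ s, ‖y u - z u‖ ≤ D) → ‖F y s - F z s‖ ≤ K * D

/-- The function equal to `v + e^{kt} z(t)` for `t ≥ 0` and to `v + z(t)` for `t ≤ 0`; it turns a
bounded `z` into a function of exponential growth rate `k`. -/
def expWeighted (k : ℝ) (v : E) (z : ℝ → E) (t : ℝ) : E := v + Real.exp (k * max t 0) • z t

/-- The Picard operator of the problem `y' = F y` on `[0, ∞)`, `y = v` on `(-∞, 0]`, written in the
unknown `z` of `y = expWeighted k v z`; for large `k` it contracts the supremum norm. -/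
def weightedPicard (F : (ℝ → E) → ℝ → E) (k : ℝ) (v : E) (z : ℝ → E) (t : ℝ) : E :=
  Real.exp (-(k * max t 0)) • ∫ s in 0..max t 0, F (expWeighted k v z) s

lemma norm_integral_le_of_norm_le_mul_exp {g : ℝ → E} {A k T : ℝ} (hk : 0 < k) (hA : 0 ≤ A)
    (hT : 0 ≤ T) (hg : ∀ s ∈ Icc 0 T, ‖g s‖ ≤ A * Real.exp (k * s)) :
    ‖∫ s in 0..T, g s‖ ≤ A / k * Real.exp (k * T) := by
  have hderiv : ∀ u, HasDerivAt (fun u => A / k * Real.exp (k * u)) (A * Real.exp (k * u)) u :=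
    fun u => by
      have hlin : HasDerivAt (fun u => k * u) k u := by
        simpa using (hasDerivAt_id u).const_mul k
      exact (hlin.exp.const_mul (A / k)).congr_deriv (by field_simp)
  have hint : IntervalIntegrable (fun s => A * Real.exp (k * s)) volume 0 T :=
    Continuous.intervalIntegrable (by fun_prop) _ _
  calc ‖∫ s in 0..T, g s‖ ≤ ∫ s in 0..T, A * Real.exp (k * s) :=
        intervalIntegral.norm_integral_le_of_norm_le hT
          (ae_of_all _ fun s hs => hg s (Ioc_subset_Icc_self hs)) hint
    _ = A / k * Real.exp (k * T) - A / k * Real.exp (k * 0) :=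
        intervalIntegral.integral_eq_sub_of_hasDerivAt (fun u _ => hderiv u) hint
    _ ≤ A / k * Real.exp (k * T) := sub_le_self _ (by positivity)

variable {F : (ℝ → E) → ℝ → E} {k K C : ℝ} {v : E}

lemma norm_exp_neg_smul_integral_le {g : ℝ → E} {A t : ℝ} (hk : 0 < k) (hA : 0 ≤ A)
    (hg : ∀ s, 0 ≤ s → ‖g s‖ ≤ A * Real.exp (k * s)) :
    ‖Real.exp (-(k * max t 0)) • ∫ s in 0..max t 0, g s‖ ≤ A / k := by
  rw [norm_smul, Real.norm_eq_abs, Real.abs_exp, Real.exp_neg, inv_mul_le_iff₀ (Real.exp_pos _),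
    mul_comm]
  exact norm_integral_le_of_norm_le_mul_exp hk hA (le_max_right _ _) fun s hs => hg s hs.1

lemma continuous_expWeighted {z : ℝ → E} (hz : Continuous z) : Continuous (expWeighted k v z) := by
  unfold expWeighted
  fun_prop

lemma norm_apply_expWeighted_sub_le (hk : 0 ≤ k) (hlip : CausalLipschitz K F)
    {z w : ℝ → E} {D s : ℝ} (hzw : ∀ u, ‖z u - w u‖ ≤ D) (hs : 0 ≤ s) :
    ‖F (expWeighted k v z) s - F (expWeighted k v w) s‖ ≤ K * D * Real.exp (k * s) := by
  rw [mul_assoc]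
  refine hlip _ _ s _ hs fun u hu => ?_
  have hDnn : 0 ≤ D := (norm_nonneg _).trans (hzw u)
  have hus : max u 0 ≤ s := max_le hu hs
  rw [expWeighted, expWeighted, add_sub_add_left_eq_sub, ← smul_sub, norm_smul, Real.norm_eq_abs,
    Real.abs_exp, mul_comm]
  gcongr
  exact hzw u

lemma continuous_weightedPicard (hcont : ∀ y, Continuous y → Continuous (F y)) {z : ℝ → E}
    (hz : Continuous z) : Continuous (weightedPicard F k v z) := by
  have hprimitive : Continuous fun T => ∫ s in 0..T, F (expWeighted k v z) s :=
    intervalIntegral.continuous_primitive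
      (fun _ _ => (hcont _ (continuous_expWeighted hz)).intervalIntegrable _ _) 0
  unfold weightedPicard
  fun_prop

lemma norm_weightedPicard_sub_le (hK : 0 < K) (hcont : ∀ y, Continuous y → Continuous (F y))
    (hlip : CausalLipschitz K F) {z w : ℝ → E} (hz : Continuous z) (hw : Continuous w) {D : ℝ}
    (hzw : ∀ u, ‖z u - w u‖ ≤ D) (t : ℝ) :
    ‖weightedPicard F (2 * K) v z t - weightedPicard F (2 * K) v w t‖ ≤ 1 / 2 * D := by
  have hDnn : 0 ≤ D := (norm_nonneg _).trans (hzw t)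
  rw [weightedPicard, weightedPicard, ← smul_sub, ← intervalIntegral.integral_sub
    ((hcont _ (continuous_expWeighted hz)).intervalIntegrable _ _)
    ((hcont _ (continuous_expWeighted hw)).intervalIntegrable _ _),
    show 1 / 2 * D = K * D / (2 * K) by field_simp]
  exact norm_exp_neg_smul_integral_le (by positivity) (by positivity) fun s hs =>
    norm_apply_expWeighted_sub_le (by positivity) hlip hzw hs

lemma norm_weightedPicard_le (hK : 0 < K) (hlip : CausalLipschitz K F)
    (hconst : ∀ s, 0 ≤ s → ‖F (fun _ => v) s‖ ≤ C) {z : ℝ → E} {D : ℝ} (hz : ∀ u, ‖z u‖ ≤ D)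
    (t : ℝ) : ‖weightedPicard F (2 * K) v z t‖ ≤ (C + K * D) / (2 * K) := by
  have hDnn : 0 ≤ D := (norm_nonneg _).trans (hz t)
  have hC : 0 ≤ C := (norm_nonneg _).trans (hconst 0 le_rfl)
  refine norm_exp_neg_smul_integral_le (by positivity) (by positivity) fun s hs => ?_
  have hexp : C ≤ C * Real.exp (2 * K * s) :=
    le_mul_of_one_le_right hC (Real.one_le_exp (by positivity))
  have hdiff := norm_apply_expWeighted_sub_le (k := 2 * K) (v := v) (w := 0) (by positivity) hlip
    (by simpa using hz) hs
  have hzero : expWeighted (2 * K) v 0 = fun _ => v := by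
    funext t
    simp [expWeighted]
  rw [hzero] at hdiff
  linarith [norm_le_norm_add_norm_sub' (F (expWeighted (2 * K) v z) s) (F (fun _ => v) s),
    hconst s hs]

variable [CompleteSpace E]

lemma exists_weightedPicard_eq (hK : 0 < K) (hcont : ∀ y, Continuous y → Continuous (F y))
    (hlip : CausalLipschitz K F) (hconst : ∀ s, 0 ≤ s → ‖F (fun _ => v) s‖ ≤ C) :
    ∃ z, Continuous z ∧ weightedPicard F (2 * K) v z = z := by
  let Φ (z : BoundedContinuousFunction ℝ E) : BoundedContinuousFunction ℝ E :=
    .ofNormedAddCommGroup (weightedPicard F (2 * K) v z)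
      (continuous_weightedPicard hcont z.continuous) _
      (norm_weightedPicard_le hK hlip hconst z.norm_coe_le_norm)
  have hcontract : ContractingWith (1 / 2) Φ := by
    refine ⟨NNReal.half_lt_self one_ne_zero, LipschitzWith.of_dist_le_mul fun z w => ?_⟩
    refine (BoundedContinuousFunction.dist_le (by positivity)).2 fun t => ?_
    rw [dist_eq_norm]
    exact norm_weightedPicard_sub_le hK hcont hlip z.continuous w.continuous
      (fun u => dist_eq_norm (z u) (w u) ▸ BoundedContinuousFunction.dist_coe_le_dist u) t
  exact ⟨hcontract.fixedPoint, hcontract.fixedPoint.continuous,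
    congrArg DFunLike.coe hcontract.fixedPoint_isFixedPt⟩

lemma exists_solution_of_causal_lipschitz (hK : 0 < K)
    (hcont : ∀ y, Continuous y → Continuous (F y))
    (hlip : CausalLipschitz K F) (hconst : ∀ s, 0 ≤ s → ‖F (fun _ => v) s‖ ≤ C) :
    ∃ y, Continuous y ∧ (∀ t ≤ 0, y t = v) ∧
      ∀ t, 0 ≤ t → HasDerivWithinAt y (F y t) (Ici t) t := by
  obtain ⟨z, hz, hfix⟩ := exists_weightedPicard_eq hK hcont hlip hconst
  have hycont : Continuous (expWeighted (2 * K) v z) := continuous_expWeighted hz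
  have hy : ∀ t, expWeighted (2 * K) v z t =
      v + ∫ s in 0..max t 0, F (expWeighted (2 * K) v z) s := fun t => by
    conv_lhs => rw [expWeighted, ← hfix, weightedPicard, smul_smul, ← Real.exp_add]
    simp
  set y := expWeighted (2 * K) v z
  refine ⟨y, hycont, fun t ht => by rw [hy, max_eq_right ht]; simp, fun t ht => ?_⟩
  have hFcont := hcont y hycont
  have hprimitive : HasDerivAt (fun t => v + ∫ s in 0..t, F y s) (F y t) t :=
    (intervalIntegral.integral_hasDerivAt_right (hFcont.intervalIntegrable _ _)
      (hFcont.stronglyMeasurableAtFilter _ _) hFcont.continuousAt).const_add v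
  refine hprimitive.hasDerivWithinAt.congr (fun u hu => ?_) ?_
  · rw [hy, max_eq_left (ht.trans hu)]
  · rw [hy, max_eq_left ht]

end Causal

/-! ### The structural constants -/

section Constants

variable {m : ℕ} {d : Fin m → ℝ → ℝ} {a : Fin m → Fin m → ℝ → ℝ} {β c : Fin m → ℝ → ℝ}
  {r : Fin m → ℝ}

/-- All coefficients of the Nicholson system as a single finite family. -/
def coeff (d : Fin m → ℝ → ℝ) (a : Fin m → Fin m → ℝ → ℝ) (β c : Fin m → ℝ → ℝ) :
    Fin m ⊕ Fin m × Fin m ⊕ Fin m ⊕ Fin m → ℝ → ℝ :=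
  Sum.elim d (Sum.elim (fun p => a p.1 p.2) (Sum.elim β c))

/-- Conditions (a1), (a4)-(a6) and the nonnegativity of the couplings. -/
structure Admissible (d : Fin m → ℝ → ℝ) (a : Fin m → Fin m → ℝ → ℝ)
    (β c : Fin m → ℝ → ℝ) : Prop where
  almostPeriodic : ∀ k, AlmostPeriodic (coeff d a β c k)
  a_nonneg : ∀ i j t, 0 ≤ a i j t
  β_pos : ∀ i t, 0 < β i t
  exists_c_ge : ∃ c₀ > 0, ∀ i t, c₀ ≤ c i t
  dissipative : ∀ i t, 0 < d i t - ∑ j, a j i t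

/-- The constants of the contraction argument: `μ` are the weights of the exponential ordering, `η`
is the margin by which the system is monotone for it, `κ` bounds from below the integrals of the
birth rates over windows of length `L`, `B` bounds the coefficients and the weights, `R` the delays,
and `c₀ ≤ c`. -/
structure StabilityConstants (d : Fin m → ℝ → ℝ) (a : Fin m → Fin m → ℝ → ℝ)
    (β c : Fin m → ℝ → ℝ) (r : Fin m → ℝ) extends Admissible d a β c where
  μ : Fin m → ℝ
  (η L κ B R c₀ : ℝ)
  η_pos : 0 < η
  L_pos : 0 < L
  κ_pos : 0 < κ
  B_pos : 0 < B
  R_pos : 0 < R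
  c₀_pos : 0 < c₀
  r_pos : ∀ i, 0 < r i
  r_le : ∀ i, r i ≤ R
  μ_le : ∀ i, μ i ≤ B
  coeff_le : ∀ k t, coeff d a β c k t ≤ B
  c_ge : ∀ i t, c₀ ≤ c i t
  margin : ∀ i t, η ≤ μ i - d i t - β i t * (Real.exp (-2) * Real.exp (μ i * r i))
  window : ∀ i t, κ ≤ ∫ u in t..(t + L), β i u

lemma NicholsonHyps.admissible (hN : NicholsonHyps m d a β c) : Admissible d a β c := by
  obtain ⟨hd, ha, hβ, hc, -, ha0, -, hβ0, hc0, hdiss⟩ := hN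
  refine ⟨?_, ha0, hβ0, hc0, hdiss⟩
  rintro (i | p | i | i)
  exacts [hd i, ha p.1 p.2, hβ i, hc i]

namespace Admissible

lemma almostPeriodic_d (hA : Admissible d a β c) (i : Fin m) : AlmostPeriodic (d i) :=
  hA.almostPeriodic (.inl i)

lemma almostPeriodic_a (hA : Admissible d a β c) (i j : Fin m) : AlmostPeriodic (a i j) :=
  hA.almostPeriodic (.inr (.inl (i, j)))

lemma almostPeriodic_β (hA : Admissible d a β c) (i : Fin m) : AlmostPeriodic (β i) :=
  hA.almostPeriodic (.inr (.inr (.inl i)))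

lemma almostPeriodic_c (hA : Admissible d a β c) (i : Fin m) : AlmostPeriodic (c i) :=
  hA.almostPeriodic (.inr (.inr (.inr i)))

lemma d_nonneg (hA : Admissible d a β c) (i : Fin m) (t : ℝ) : 0 ≤ d i t := by
  have hsum : 0 ≤ ∑ j, a j i t := Finset.sum_nonneg fun j _ => hA.a_nonneg j i t
  linarith [hA.dissipative i t]

lemma exists_coeff_le (hA : Admissible d a β c) : ∃ B, ∀ k t, coeff d a β c k t ≤ B := by
  choose B hB using fun k => (hA.almostPeriodic k).exists_abs_le
  obtain ⟨B', hB'⟩ := Finite.exists_le B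
  exact ⟨B', fun k t => (le_of_abs_le (hB k t)).trans (hB' k)⟩

lemma exists_window_β (hA : Admissible d a β c) :
    ∃ L > 0, ∃ κ > 0, ∀ i t, κ ≤ ∫ u in t..(t + L), β i u := by
  choose L hL κ hκ hwindow using fun i => (hA.almostPeriodic_β i).exists_le_integral
    (fun t => (hA.β_pos i t).le) (hA.β_pos i 0)
  obtain ⟨L', hL'⟩ := Finite.exists_le L
  obtain ⟨κ', hκ'⟩ := Finite.exists_ge fun i => (⟨κ i, hκ i⟩ : Ioi (0 : ℝ))
  refine ⟨max L' 1, by positivity, κ', κ'.2, fun i t => ?_⟩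
  calc (κ' : ℝ) ≤ κ i := hκ' i
    _ ≤ ∫ u in t..(t + L i), β i u := hwindow i t
    _ ≤ ∫ u in t..(t + max L' 1), β i u :=
      intervalIntegral.integral_mono_interval le_rfl (le_add_of_nonneg_right (hL i).le)
        (by gcongr; exact (hL' i).trans (le_max_left _ _))
        (ae_of_all _ fun u => (hA.β_pos i u).le)
        ((hA.almostPeriodic_β i).1.intervalIntegrable _ _)

end Admissible

lemma AlmostPeriodic.le_supR {f : ℝ → ℝ} (hf : AlmostPeriodic f) (t : ℝ) : f t ≤ supR f := by
  obtain ⟨B, hB⟩ := hf.exists_abs_le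
  exact le_csSup ⟨B, forall_mem_range.2 fun u => le_of_abs_le (hB u)⟩ (mem_range_self t)

lemma exp_muN_mul {i : Fin m} (hr : 0 < r i) (hβ : 0 < supR (β i)) :
    Real.exp (muN r β i * r i) = Real.exp 2 / (r i * supR (β i)) := by
  rw [muN, one_div, mul_right_comm, inv_mul_cancel₀ hr.ne', one_mul, Real.exp_log (by positivity)]

lemma supR_add_one_div_lt_muN {i : Fin m} (hr : 0 < r i) (hβ : 0 < supR (β i))
    (hcond : r i * supR (β i) * Real.exp (supR (d i) * r i) < Real.exp 1) :
    supR (d i) + 1 / r i < muN r β i := by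
  have hexp : Real.exp ((supR (d i) + 1 / r i) * r i) < Real.exp (muN r β i * r i) := by
    rw [exp_muN_mul hr hβ, lt_div_iff₀ (by positivity), add_mul, one_div_mul_cancel hr.ne',
      Real.exp_add, show (2 : ℝ) = 1 + 1 by norm_num, Real.exp_add]
    nlinarith [Real.exp_pos 1]
  exact lt_of_mul_lt_mul_right (Real.exp_lt_exp.1 hexp) hr.le

lemma Admissible.margin_muN (hA : Admissible d a β c) {i : Fin m} (hr : 0 < r i) (t : ℝ) :
    muN r β i - (supR (d i) + 1 / r i) ≤
      muN r β i - d i t - β i t * (Real.exp (-2) * Real.exp (muN r β i * r i)) := by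
  have hβ : 0 < supR (β i) := (hA.β_pos i t).trans_le ((hA.almostPeriodic_β i).le_supR t)
  have hbirth : β i t * (Real.exp (-2) * Real.exp (muN r β i * r i)) ≤ 1 / r i := by
    calc β i t * (Real.exp (-2) * Real.exp (muN r β i * r i))
        ≤ supR (β i) * (Real.exp (-2) * Real.exp (muN r β i * r i)) := by
          gcongr
          exact (hA.almostPeriodic_β i).le_supR t
      _ = 1 / r i := by
          rw [exp_muN_mul hr hβ, Real.exp_neg]
          field_simp
  linarith [(hA.almostPeriodic_d i).le_supR t]

lemma Admissible.nonempty_stabilityConstants (hA : Admissible d a β c) (hr : ∀ i, 0 < r i)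
    (hcond : ∀ i, r i * supR (β i) * Real.exp (supR (d i) * r i) < Real.exp 1) :
    Nonempty (StabilityConstants d a β c r) := by
  have hβ : ∀ i, 0 < supR (β i) := fun i =>
    (hA.β_pos i 0).trans_le ((hA.almostPeriodic_β i).le_supR 0)
  have hmargin : ∀ i, 0 < muN r β i - (supR (d i) + 1 / r i) := fun i =>
    sub_pos.2 (supR_add_one_div_lt_muN (hr i) (hβ i) (hcond i))
  obtain ⟨η, hη⟩ := Finite.exists_ge fun i => (⟨_, hmargin i⟩ : Ioi (0 : ℝ))
  obtain ⟨L, hL, κ, hκ, hwindow⟩ := hA.exists_window_β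
  obtain ⟨B, hB⟩ := hA.exists_coeff_le
  obtain ⟨B', hB'⟩ := Finite.exists_le (muN r β)
  obtain ⟨R, hR⟩ := Finite.exists_le r
  obtain ⟨c₀, hc₀, hc⟩ := hA.exists_c_ge
  exact ⟨{
    toAdmissible := hA
    μ := muN r β, η := η, L := L, κ := κ, B := max B (max B' 1), R := max R 1, c₀ := c₀
    η_pos := η.2, L_pos := hL, κ_pos := hκ, B_pos := by positivity, R_pos := by positivity
    c₀_pos := hc₀
    r_pos := hr
    r_le := fun i => (hR i).trans (le_max_left _ _)
    μ_le := fun i => (hB' i).trans ((le_max_left _ _).trans (le_max_right _ _))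
    coeff_le := fun k t => (hB k t).trans (le_max_left _ _)
    c_ge := hc
    margin := fun i t => le_trans (hη i) (hA.margin_muN (hr i) t)
    window := hwindow }⟩

namespace StabilityConstants

lemma d_le (H : StabilityConstants d a β c r) (i : Fin m) (t : ℝ) : d i t ≤ H.B :=
  H.coeff_le (.inl i) t

lemma a_le (H : StabilityConstants d a β c r) (i j : Fin m) (t : ℝ) : a i j t ≤ H.B :=
  H.coeff_le (.inr (.inl (i, j))) t

lemma β_le (H : StabilityConstants d a β c r) (i : Fin m) (t : ℝ) : β i t ≤ H.B :=
  H.coeff_le (.inr (.inr (.inl i))) t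

lemma c_le (H : StabilityConstants d a β c r) (i : Fin m) (t : ℝ) : c i t ≤ H.B :=
  H.coeff_le (.inr (.inr (.inr i))) t

lemma c_pos (H : StabilityConstants d a β c r) (i : Fin m) (t : ℝ) : 0 < c i t :=
  H.c₀_pos.trans_le (H.c_ge i t)

lemma μ_pos (H : StabilityConstants d a β c r) (i : Fin m) : 0 < H.μ i := by
  have hbirth : 0 < β i 0 * (Real.exp (-2) * Real.exp (H.μ i * r i)) :=
    mul_pos (H.β_pos i 0) (by positivity)
  linarith [H.margin i 0, H.d_nonneg i 0, H.η_pos]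

end StabilityConstants

end Constants

/-! ### The right-hand side -/

section RightHandSide

variable {m : ℕ} {d : Fin m → ℝ → ℝ} {a : Fin m → Fin m → ℝ → ℝ} {β c : Fin m → ℝ → ℝ}
  {r : Fin m → ℝ}

/-- The right-hand side of the Nicholson system with absolute values in the gain terms: it is
globally Lipschitz, its solutions with positive initial values are positive, and on nonnegative
functions it agrees with `rhs`. -/
def absRhs (d : Fin m → ℝ → ℝ) (a : Fin m → Fin m → ℝ → ℝ) (β c : Fin m → ℝ → ℝ)
    (r : Fin m → ℝ) (y : ℝ → Fin m → ℝ) (t : ℝ) (i : Fin m) : ℝ :=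
  -(d i t) * y t i + ∑ j, a i j t * |y t j| + β i t * ricker (c i t) |y (t - r i) i|

lemma rhs_eq_ricker (i : Fin m) (t : ℝ) (y : ℝ → Fin m → ℝ) :
    rhs d a β c r i t y =
      -(d i t) * y t i + ∑ j, a i j t * y t j + β i t * ricker (c i t) (y (t - r i) i) := by
  rw [rhs, ricker, mul_assoc (β i t)]

lemma absRhs_eq_rhs {y : ℝ → Fin m → ℝ} {t : ℝ} {i : Fin m} (hy : ∀ j, 0 ≤ y t j)
    (hdelay : 0 ≤ y (t - r i) i) : absRhs d a β c r y t i = rhs d a β c r i t y := by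
  simp only [absRhs, rhs_eq_ricker, abs_of_nonneg (hy _), abs_of_nonneg hdelay]

lemma Admissible.continuous_absRhs (hA : Admissible d a β c) {y : ℝ → Fin m → ℝ}
    (hy : Continuous y) : Continuous (absRhs d a β c r y) := by
  refine continuous_pi fun i => ?_
  have hd := (hA.almostPeriodic_d i).1
  have ha := fun j => (hA.almostPeriodic_a i j).1
  have hβ := (hA.almostPeriodic_β i).1
  have hc := (hA.almostPeriodic_c i).1
  unfold absRhs ricker
  fun_prop

lemma Admissible.continuousOn_rhs (hA : Admissible d a β c) {y : ℝ → Fin m → ℝ} {t₀ : ℝ}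
    (hr : ∀ i, 0 < r i) (hy : ∀ i, ContinuousOn (fun t => y t i) (Ici (t₀ - r i))) (i : Fin m) :
    ContinuousOn (fun t => rhs d a β c r i t y) (Ici t₀) := by
  have hd := (hA.almostPeriodic_d i).1.continuousOn (s := Ici t₀)
  have ha := fun j => (hA.almostPeriodic_a i j).1.continuousOn (s := Ici t₀)
  have hβ := (hA.almostPeriodic_β i).1.continuousOn (s := Ici t₀)
  have hc := (hA.almostPeriodic_c i).1.continuousOn (s := Ici t₀)
  have hnow : ∀ j, ContinuousOn (fun t => y t j) (Ici t₀) := fun j =>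
    (hy j).mono (Ici_subset_Ici.2 (by linarith [hr j]))
  have hdelay : ContinuousOn (fun t => y (t - r i) i) (Ici t₀) :=
    (hy i).comp (by fun_prop) fun t ht => sub_le_sub_right (mem_Ici.1 ht) (r i)
  have hsum : ContinuousOn (fun t => ∑ j, a i j t * y t j) (Ici t₀) :=
    continuousOn_finsetSum _ fun j _ => (ha j).mul (hnow j)
  exact ((hd.neg.mul (hnow i)).add hsum).add ((hβ.mul hdelay).mul (hc.mul hdelay).neg.rexp)

namespace StabilityConstants

variable {x y : ℝ → Fin m → ℝ} {t D : ℝ} {i : Fin m}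

lemma abs_absRhs_sub_le (H : StabilityConstants d a β c r) (hnow : ∀ j, |x t j - y t j| ≤ D)
    (hdelay : |x (t - r i) i - y (t - r i) i| ≤ D) :
    |absRhs d a β c r x t i - absRhs d a β c r y t i| ≤ (m + 2) * H.B * D := by
  have hloss : |d i t * (x t i - y t i)| ≤ H.B * D := by
    rw [abs_mul, abs_of_nonneg (H.d_nonneg i t)]
    exact mul_le_mul (H.d_le i t) (hnow i) (abs_nonneg _) H.B_pos.le
  have hcoupling : |∑ j, a i j t * (|x t j| - |y t j|)| ≤ m * (H.B * D) := by
    have hterm : ∀ j ∈ Finset.univ, |a i j t * (|x t j| - |y t j|)| ≤ H.B * D := fun j _ => by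
      rw [abs_mul, abs_of_nonneg (H.a_nonneg i j t)]
      exact mul_le_mul (H.a_le i j t) ((abs_abs_sub_abs_le_abs_sub _ _).trans (hnow j))
        (abs_nonneg _) H.B_pos.le
    simpa using (Finset.abs_sum_le_sum_abs _ _).trans (Finset.sum_le_sum hterm)
  have hbirth : |β i t * (ricker (c i t) |x (t - r i) i| - ricker (c i t) |y (t - r i) i|)| ≤
      H.B * D := by
    rw [abs_mul, abs_of_pos (H.β_pos i t)]
    refine mul_le_mul (H.β_le i t) ?_ (abs_nonneg _) H.B_pos.le
    calc _ ≤ |(|x (t - r i) i| - |y (t - r i) i|)| :=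
          abs_ricker_sub_ricker_le (H.c_pos i t).le (abs_nonneg _) (abs_nonneg _)
      _ ≤ D := (abs_abs_sub_abs_le_abs_sub _ _).trans hdelay
  have hsplit : absRhs d a β c r x t i - absRhs d a β c r y t i = -(d i t * (x t i - y t i)) +
      ∑ j, a i j t * (|x t j| - |y t j|) +
      β i t * (ricker (c i t) |x (t - r i) i| - ricker (c i t) |y (t - r i) i|) := by
    simp only [absRhs, mul_sub, Finset.sum_sub_distrib]
    ring
  rw [hsplit]
  rw [abs_le] at *
  constructor <;> linarith

lemma abs_rhs_sub_le (H : StabilityConstants d a β c r) (hx : ∀ u, t - r i ≤ u → ∀ j, 0 ≤ x u j)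
    (hy : ∀ u, t - r i ≤ u → ∀ j, 0 ≤ y u j) (hnow : ∀ j, |x t j - y t j| ≤ D)
    (hdelay : |x (t - r i) i - y (t - r i) i| ≤ D) :
    |rhs d a β c r i t x - rhs d a β c r i t y| ≤ (m + 2) * H.B * D := by
  have ht : t - r i ≤ t := sub_le_self t (H.r_pos i).le
  rw [← absRhs_eq_rhs (hx t ht) (hx _ le_rfl i), ← absRhs_eq_rhs (hy t ht) (hy _ le_rfl i)]
  exact H.abs_absRhs_sub_le hnow hdelay

lemma abs_rhs_le (H : StabilityConstants d a β c r) (hnow : ∀ j, y t j ∈ Icc 0 D)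
    (hdelay : y (t - r i) i ∈ Icc 0 D) :
    |rhs d a β c r i t y| ≤ (m + 2) * H.B * D := by
  have hlip := H.abs_absRhs_sub_le (x := y) (y := 0) (t := t) (D := D) (i := i)
    (fun j => by simpa [abs_of_nonneg (hnow j).1] using (hnow j).2)
    (by simpa [abs_of_nonneg hdelay.1] using hdelay.2)
  rw [absRhs_eq_rhs (fun j => (hnow j).1) hdelay.1] at hlip
  simpa [absRhs, ricker] using hlip

lemma causalLipschitz_absRhs (H : StabilityConstants d a β c r) :
    CausalLipschitz ((m + 2) * H.B) (absRhs d a β c r) := by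
  intro x y s D _ hxy
  have hD : 0 ≤ D := (norm_nonneg _).trans (hxy s le_rfl)
  have hcomp : ∀ u ≤ s, ∀ j, |x u j - y u j| ≤ D := fun u hu j =>
    (norm_le_pi_norm (x u - y u) j).trans (hxy u hu)
  have hB := H.B_pos
  exact (pi_norm_le_iff_of_nonneg (by positivity)).2 fun i =>
    H.abs_absRhs_sub_le (hcomp s le_rfl) (hcomp _ (sub_le_self s (H.r_pos i).le) i)

end StabilityConstants

end RightHandSide

/-! ### Contraction between approximate solutions -/

section Contraction

variable {m : ℕ} {d : Fin m → ℝ → ℝ} {a : Fin m → Fin m → ℝ → ℝ} {β c : Fin m → ℝ → ℝ}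
  {r : Fin m → ℝ}

lemma eventually_mul_le {C b : ℝ} (hb : 0 < b) :
    ∀ᶠ ε in 𝓝[>] (0 : ℝ), C * ε ≤ b := by
  have hlim : Tendsto (fun ε => C * ε) (𝓝[>] (0 : ℝ)) (𝓝 (C * 0)) :=
    (continuous_const.mul continuous_id).continuousWithinAt.tendsto
  exact hlim.eventually_le_const (by simpa using hb)

lemma forall_le_of_improvement {P : ℝ → ℝ → Prop} {l₀ l₁ γ τ s₀ : ℝ} (hτ : 0 ≤ τ) (hγ : 0 ≤ γ)
    (hmono : ∀ s ≥ s₀, ∀ l l', l' ≤ l → P l s → P l' s) (hstart : ∀ s ≥ s₀, P l₀ s)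
    (himprove : ∀ s ≥ s₀, ∀ l ∈ Icc l₀ l₁, P l s → P (l + γ) (s + τ)) (n : ℕ) {s : ℝ}
    (hs : s₀ ≤ s) : ∀ l ≤ l₁, l ≤ l₀ + n * γ → P l (s + n * τ) := by
  induction n with
  | zero =>
    simp only [Nat.cast_zero, zero_mul, add_zero]
    exact fun l _ hl => hmono s hs _ _ hl (hstart s hs)
  | succ n ih =>
    intro l hl₁ hl
    have hsn : s ≤ s + n * τ := le_add_of_nonneg_right (by positivity)
    push_cast at hl ⊢
    rw [add_one_mul, ← add_assoc] at hl ⊢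
    rcases le_total l l₀ with hll₀ | hll₀
    · exact hmono _ (by linarith) _ _ hll₀ (hstart _ (by linarith))
    have hprev : max l₀ (l - γ) ∈ Icc l₀ l₁ :=
      ⟨le_max_left _ _, max_le (by linarith) (by linarith)⟩
    have hnγ : 0 ≤ n * γ := by positivity
    exact hmono _ (by linarith) _ _ (by linarith [le_max_right l₀ (l - γ)]) <|
      himprove _ (by linarith) _ hprev (ih _ hprev.2 (max_le (by linarith) (by linarith)))

namespace StabilityConstants

variable {H : StabilityConstants d a β c r} {x x' y y' w w' : ℝ → Fin m → ℝ}
  {ε M K l t₀ t₁ t s T θ : ℝ} {i : Fin m}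

/-- `x` solves the Nicholson system on `[t₀, ∞)` up to the error `ε`, with derivative `x'`, and
takes values in `[M, K]` on `[t₀ - R, ∞)`, hence also at all delayed arguments. -/
structure ApproxSol (H : StabilityConstants d a β c r) (ε M K t₀ : ℝ) (x x' : ℝ → Fin m → ℝ) :
    Prop where
  hasDerivAt : ∀ i t, t₀ ≤ t → HasDerivAt (fun u => x u i) (x' t i) t
  continuousOn : ∀ i, ContinuousOn (fun u => x' u i) (Ici t₀)
  abs_sub_rhs_le : ∀ i t, t₀ ≤ t → |x' t i - rhs d a β c r i t x| ≤ ε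
  mem_Icc : ∀ i t, t₀ - H.R ≤ t → x t i ∈ Icc M K

/-- The rate `e^{-μᵢ u} (e^{μᵢ u} wᵢ)'(u)` for a function `w` with derivative `w'`. -/
def expRate (H : StabilityConstants d a β c r) (w w' : ℝ → Fin m → ℝ) (i : Fin m) (u : ℝ) : ℝ :=
  w' u i + H.μ i * w u i

/-- The constant of strict sublinearity of the birth terms on `[M, K]`. -/
def sublinearity (H : StabilityConstants d a β c r) (M K : ℝ) : ℝ :=
  H.c₀ * M ^ 2 * Real.exp (-(H.B * K))

lemma sublinearity_pos (H : StabilityConstants d a β c r) (hM : 0 < M) :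
    0 < H.sublinearity M K := by
  have := H.c₀_pos
  unfold sublinearity
  positivity

/-- The segment of `w` on `[t - R, t]` is nonnegative in the exponential ordering with weights `μ`:
each `wᵢ` is nonnegative and `e^{μᵢ u} wᵢ(u)` is nondecreasing. -/
def ExpNonneg (H : StabilityConstants d a β c r) (w w' : ℝ → Fin m → ℝ) (t : ℝ) : Prop :=
  ∀ i, ∀ u ∈ Icc (t - H.R) t, 0 ≤ w u i ∧ 0 ≤ H.expRate w w' i u

lemma expRate_sub_smul (H : StabilityConstants d a β c r) (i : Fin m) (t : ℝ) :
    H.expRate (x - l • y) (x' - l • y') i t = H.expRate x x' i t - l * H.expRate y y' i t := by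
  simp only [expRate, Pi.sub_apply, Pi.smul_apply, smul_eq_mul]
  ring

lemma ExpNonneg.mono {l' : ℝ} (hw : H.ExpNonneg (x - l • y) (x' - l • y') t)
    (hy : H.ExpNonneg y y' t) (hl : l' ≤ l) : H.ExpNonneg (x - l' • y) (x' - l' • y') t := by
  intro i u hu
  obtain ⟨hw, hrate⟩ := hw i u hu
  have hy := hy i u hu
  rw [expRate_sub_smul] at hrate ⊢
  simp only [Pi.sub_apply, Pi.smul_apply, smul_eq_mul] at hw ⊢
  constructor <;> nlinarith

lemma le_of_expRate_nonneg (H : StabilityConstants d a β c r) (hst : s ≤ t) (htT : t ≤ s + T)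
    (hθ : 0 ≤ θ) (hw : ∀ u ∈ Icc s t, HasDerivAt (fun u => w u i) (w' u i) u)
    (hrate : ∀ u ∈ Icc s t, 0 ≤ H.expRate w w' i u) (hs : θ ≤ w s i) :
    Real.exp (-(H.B * T)) * θ ≤ w t i := by
  have hexp : H.μ i * (t - s) ≤ H.B * T :=
    mul_le_mul (H.μ_le i) (by linarith) (by linarith) H.B_pos.le
  calc Real.exp (-(H.B * T)) * θ ≤ Real.exp (-(H.μ i * (t - s))) * w s i := by gcongr
    _ ≤ w t i := exp_neg_mul_le hst (H.μ_pos i).le hw hrate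

lemma le_of_mul_birth_le_expRate (H : StabilityConstants d a β c r) {g : ℝ} (hg : 0 ≤ g)
    (ht : t ∈ Icc (s + H.L) (s + (H.L + H.R)))
    (hw : ∀ u ∈ Icc s t, HasDerivAt (fun u => w u i) (w' u i) u)
    (hrate : ∀ u ∈ Icc s t, β i u * g ≤ H.expRate w w' i u) (hs : 0 ≤ w s i) :
    Real.exp (-(H.B * (H.L + H.R))) * (g * H.κ) ≤ w t i := by
  have hL := H.L_pos
  have hst : s ≤ t := by linarith [ht.1]
  have hβ := (H.almostPeriodic_β i).1
  have hQ : ∀ u, HasDerivAt (fun u => (∫ z in s..u, β i z) * g) (β i u * g) u := fun u =>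
    (hβ.integral_hasStrictDerivAt s u).hasDerivAt.mul_const g
  have hgrowth := exp_neg_mul_add_le hst (H.μ_pos i).le hw hQ
    (fun u => mul_nonneg (H.β_pos i u).le hg) hrate
  have hwindow : H.κ ≤ ∫ z in s..t, β i z :=
    (H.window i s).trans <| intervalIntegral.integral_mono_interval le_rfl (by linarith) ht.1
      (ae_of_all _ fun u => (H.β_pos i u).le) (hβ.intervalIntegrable _ _)
  have hexp : H.μ i * (t - s) ≤ H.B * (H.L + H.R) :=
    mul_le_mul (H.μ_le i) (by linarith [ht.2]) (by linarith) H.B_pos.le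
  have hκ := H.κ_pos
  refine le_trans (mul_le_mul (Real.exp_le_exp.2 (neg_le_neg hexp)) ?_ (by positivity)
    (Real.exp_pos _).le) hgrowth
  simp only [intervalIntegral.integral_same, zero_mul, sub_zero]
  nlinarith

/-- Quasimonotonicity for the exponential ordering, strengthened by strict sublinearity: `e⁻²` is
the best one-sided Lipschitz constant of the birth terms, which is where `margin` comes from. -/
lemma rhs_sub_mul_rhs_ge (H : StabilityConstants d a β c r) (hM : 0 ≤ M) (hl : l ∈ Icc 0 1)
    (hnow : ∀ j, 0 ≤ x t j - l * y t j) (hdelay : 0 ≤ x (t - r i) i - l * y (t - r i) i)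
    (hexp : x (t - r i) i - l * y (t - r i) i ≤ Real.exp (H.μ i * r i) * (x t i - l * y t i))
    (hy : y (t - r i) i ∈ Icc M K) :
    H.η * (x t i - l * y t i) + β i t * (l * (1 - l) * H.sublinearity M K) ≤
      rhs d a β c r i t x - l * rhs d a β c r i t y + H.μ i * (x t i - l * y t i) := by
  have hβ := (H.β_pos i t).le
  have hcoupling : 0 ≤ ∑ j, a i j t * x t j - l * ∑ j, a i j t * y t j := by
    rw [Finset.mul_sum, ← Finset.sum_sub_distrib]
    exact Finset.sum_nonneg fun j _ => by linarith [mul_nonneg (H.a_nonneg i j t) (hnow j)]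
  have hlipschitz := mul_le_mul_of_nonneg_left (neg_exp_mul_sub_le_ricker_sub (c := c i t)
    (sub_nonneg.1 hdelay)) hβ
  have hdelayed := mul_le_mul_of_nonneg_left hexp
    (mul_nonneg hβ (Real.exp_pos (-2)).le)
  have hsublinear := mul_le_mul_of_nonneg_left (ricker_mul_sub_mul_ricker_ge_of_bounds H.c₀_pos.le
    (H.c_ge i t) (H.c_le i t) hM hy.1 hy.2 hl.1 hl.2) hβ
  have hmargin := mul_le_mul_of_nonneg_right (H.margin i t) (hnow i)
  rw [rhs_eq_ricker, rhs_eq_ricker, sublinearity]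
  linarith

lemma ApproxSol.hasDerivAt_sub_smul (hx : H.ApproxSol ε M K t₀ x x')
    (hy : H.ApproxSol ε M K t₀ y y') (l : ℝ) (i : Fin m) (ht : t₀ ≤ t) :
    HasDerivAt (fun u => (x - l • y) u i) ((x' - l • y') t i) t :=
  (hx.hasDerivAt i t ht).sub ((hy.hasDerivAt i t ht).const_mul l)

lemma ApproxSol.continuousOn_expRate (hx : H.ApproxSol ε M K t₀ x x') (i : Fin m) :
    ContinuousOn (H.expRate x x' i) (Ici t₀) :=
  (hx.continuousOn i).add (ContinuousOn.const_mul
    (fun u hu => (hx.hasDerivAt i u hu).continuousAt.continuousWithinAt) _)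

lemma ApproxSol.expRate_sub_smul_ge (hx : H.ApproxSol ε M K t₀ x x')
    (hy : H.ApproxSol ε M K t₀ y y') (hM : 0 ≤ M) (hl : l ∈ Icc 0 1) (ht : t₀ + H.R ≤ t)
    (hw : H.ExpNonneg (x - l • y) (x' - l • y') t) (i : Fin m) :
    H.η * (x - l • y) t i + β i t * (l * (1 - l) * H.sublinearity M K) - 2 * ε ≤
      H.expRate (x - l • y) (x' - l • y') i t := by
  have hR := H.R_pos
  have hr := H.r_pos i
  have hrR := H.r_le i
  have hexp := exp_neg_mul_le (t := t) (sub_le_self t hr.le) (H.μ_pos i).le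
    (fun u hu => hx.hasDerivAt_sub_smul hy l i (by linarith [hu.1]))
    fun u hu => (hw i u ⟨by linarith [hu.1], hu.2⟩).2
  rw [sub_sub_cancel, Real.exp_neg, inv_mul_le_iff₀ (Real.exp_pos _)] at hexp
  have hexact := H.rhs_sub_mul_rhs_ge hM hl (fun j => (hw j t ⟨by linarith, le_rfl⟩).1)
    (hw i (t - r i) ⟨by linarith, by linarith⟩).1 hexp (hy.mem_Icc i _ (by linarith))
  have hxerr := abs_le.1 (hx.abs_sub_rhs_le i t (by linarith))
  have hyerr := abs_le.1 (hy.abs_sub_rhs_le i t (by linarith))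
  have hlerr : l * (y' t i - rhs d a β c r i t y) ≤ ε := by
    nlinarith [hl.1, hl.2]
  simp only [expRate, Pi.sub_apply, Pi.smul_apply, smul_eq_mul]
  linarith

lemma ApproxSol.expRate_sub_smul_ge_of_expRate_nonneg (hx : H.ApproxSol ε M K t₀ x x')
    (hy : H.ApproxSol ε M K t₀ y y') (hM : 0 ≤ M) (hl : l ∈ Icc 0 1) (ht₁ : t₀ + H.R ≤ t₁)
    (hθ : 0 ≤ θ) (hε : 4 * ε ≤ H.η * (Real.exp (-(H.B * T)) * θ))
    (hinit : ∀ i, ∀ u ∈ Icc (t₁ - H.R) t₁,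
      θ ≤ (x - l • y) u i ∧ 0 ≤ H.expRate (x - l • y) (x' - l • y') i u)
    (ht : t ∈ Icc t₁ (t₁ + T))
    (hrate : ∀ i, ∀ u ∈ Icc t₁ t, 0 ≤ H.expRate (x - l • y) (x' - l • y') i u) (i : Fin m) :
    Real.exp (-(H.B * T)) * θ ≤ (x - l • y) t i ∧
      H.η / 2 * (x - l • y) t i + β i t * (l * (1 - l) * H.sublinearity M K) ≤
        H.expRate (x - l • y) (x' - l • y') i t := by
  have hR := H.R_pos
  have hlower : ∀ i, ∀ u ∈ Icc t₁ t, Real.exp (-(H.B * T)) * θ ≤ (x - l • y) u i := fun i u hu =>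
    H.le_of_expRate_nonneg hu.1 (hu.2.trans ht.2) hθ
      (fun v hv => hx.hasDerivAt_sub_smul hy l i (by linarith [hv.1]))
      (fun v hv => hrate i v ⟨hv.1, hv.2.trans hu.2⟩) (hinit i t₁ ⟨by linarith, le_rfl⟩).1
  have hnonneg : H.ExpNonneg (x - l • y) (x' - l • y') t := fun j u hu => by
    rcases le_total u t₁ with hut | htu
    · obtain ⟨hw, hrate⟩ := hinit j u ⟨by linarith [hu.1, ht.1], hut⟩
      exact ⟨hθ.trans hw, hrate⟩
    · exact ⟨le_trans (by positivity) (hlower j u ⟨htu, hu.2⟩), hrate j u ⟨htu, hu.2⟩⟩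
  have hself := hlower i t ⟨ht.1, le_rfl⟩
  refine ⟨hself, ?_⟩
  have hstep := hx.expRate_sub_smul_ge hy hM hl (by linarith [ht.1]) hnonneg i
  linarith [mul_le_mul_of_nonneg_left hself H.η_pos.le]

lemma ApproxSol.propagate (hx : H.ApproxSol ε M K t₀ x x') (hy : H.ApproxSol ε M K t₀ y y')
    (hM : 0 < M) (hl : l ∈ Icc 0 1) (ht₁ : t₀ + H.R ≤ t₁) (hθ : 0 < θ)
    (hε : 4 * ε ≤ H.η * (Real.exp (-(H.B * T)) * θ))
    (hinit : ∀ i, ∀ u ∈ Icc (t₁ - H.R) t₁,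
      θ ≤ (x - l • y) u i ∧ 0 < H.expRate (x - l • y) (x' - l • y') i u)
    (ht : t ∈ Icc t₁ (t₁ + T)) (i : Fin m) :
    Real.exp (-(H.B * T)) * θ ≤ (x - l • y) t i ∧
      H.η / 2 * (x - l • y) t i + β i t * (l * (1 - l) * H.sublinearity M K) ≤
        H.expRate (x - l • y) (x' - l • y') i t := by
  have hR := H.R_pos
  have hstep := fun t (ht : t ∈ Icc t₁ (t₁ + T)) =>
    hx.expRate_sub_smul_ge_of_expRate_nonneg hy hM.le hl ht₁ hθ.le hε
      (fun i u hu => ⟨(hinit i u hu).1, (hinit i u hu).2.le⟩) ht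
  have hcont : ∀ i, ContinuousOn (H.expRate (x - l • y) (x' - l • y') i) (Icc t₁ (t₁ + T)) :=
    fun i => by
      rw [funext (H.expRate_sub_smul i)]
      exact ((hx.continuousOn_expRate i).sub ((hy.continuousOn_expRate i).const_mul l)).mono
        fun u hu => mem_Ici.2 (by linarith [hu.1])
  have hpos := forall_pos_of_forall_nonneg_imp_pos hcont
    (fun i => (hinit i t₁ ⟨by linarith, le_rfl⟩).2) fun u hu hrate j => by
      obtain ⟨hw, hge⟩ := hstep u hu hrate j
      have hη := H.η_pos
      have hβ := (H.β_pos j u).le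
      have hσ := (H.sublinearity_pos hM (K := K)).le
      have hl' := sub_nonneg.2 hl.2
      have hw₀ : 0 < (x - l • y) u j := lt_of_lt_of_le (by positivity) hw
      have hgain := mul_nonneg hβ (mul_nonneg (mul_nonneg hl.1 hl') hσ)
      have hdrift : 0 < H.η / 2 * (x - l • y) u j := by positivity
      linarith
  exact hstep t ht (fun j u hu => (hpos j u ⟨hu.1, hu.2.trans ht.2⟩).le) i

/-- An upper bound for the exponential rates of approximate solutions with values in `[0, K]` and
error at most `1`. -/
def rateBound (H : StabilityConstants d a β c r) (K : ℝ) : ℝ := (m + 3) * H.B * K + 1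

lemma ApproxSol.expRate_mem_Icc (hy : H.ApproxSol ε M K t₀ y y') (hM : 0 ≤ M)
    (hε : ε ≤ H.η * M / 2) (hε₁ : ε ≤ 1) (ht : t₀ ≤ t) (i : Fin m) :
    H.expRate y y' i t ∈ Icc (H.η * M / 2) (H.rateBound K) := by
  have hR := H.R_pos
  have hrR := H.r_le i
  have hη := H.η_pos
  have hnow := fun j => hy.mem_Icc j t (by linarith)
  have hdelay := hy.mem_Icc i (t - r i) (by linarith)
  have hy₀ : ∀ j, 0 ≤ y t j := fun j => hM.trans (hnow j).1
  have herr := abs_le.1 (hy.abs_sub_rhs_le i t ht)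
  have hrhs := abs_le.1 <| H.abs_rhs_le (fun j => ⟨hy₀ j, (hnow j).2⟩) ⟨hM.trans hdelay.1, hdelay.2⟩
  have hμ : H.μ i * y t i ≤ H.B * K := mul_le_mul (H.μ_le i) (hnow i).2 (hy₀ i) H.B_pos.le
  have hμd : H.η * M ≤ (H.μ i - d i t) * y t i := by
    have hbirth : 0 ≤ β i t * (Real.exp (-2) * Real.exp (H.μ i * r i)) :=
      mul_nonneg (H.β_pos i t).le (by positivity)
    have hηle : H.η ≤ H.μ i - d i t := by linarith [H.margin i t]
    exact mul_le_mul hηle (hnow i).1 hM (hη.le.trans hηle)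
  have hgain : -(d i t * y t i) ≤ rhs d a β c r i t y := by
    have hcoupling : 0 ≤ ∑ j, a i j t * y t j :=
      Finset.sum_nonneg fun j _ => mul_nonneg (H.a_nonneg i j t) (hy₀ j)
    have hbirth := mul_nonneg (H.β_pos i t).le (ricker_nonneg (c := c i t) (hM.trans hdelay.1))
    rw [rhs_eq_ricker]
    linarith
  unfold expRate rateBound
  constructor <;> linarith

lemma eventually_expRate_mem_Icc (H : StabilityConstants d a β c r) (hM : 0 < M) (K : ℝ) :
    ∀ᶠ ε in 𝓝[>] (0 : ℝ), ∀ y y' t₀, H.ApproxSol ε M K t₀ y y' → ∀ i t, t₀ ≤ t →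
      H.expRate y y' i t ∈ Icc (H.η * M / 2) (H.rateBound K) := by
  have hη := H.η_pos
  filter_upwards [eventually_mul_le (C := 1) (b := H.η * M / 2) (by positivity),
    eventually_mul_le (C := 1) one_pos] with ε hε hε₁ y y' t₀ hy i t ht
  exact hy.expRate_mem_Icc hM.le (by linarith) (by linarith) ht i

lemma ApproxSol.expNonneg (hy : H.ApproxSol ε M K t₀ y y') (hM : 0 ≤ M)
    (hrate : ∀ i t, t₀ ≤ t → H.expRate y y' i t ∈ Icc (H.η * M / 2) (H.rateBound K))
    (ht : t₀ + H.R ≤ t) : H.ExpNonneg y y' t := fun i u hu => by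
  have hη := H.η_pos
  have hR := H.R_pos
  exact ⟨hM.trans (hy.mem_Icc i u (by linarith [hu.1])).1,
    le_trans (by positivity) (hrate i u (by linarith [hu.1])).1⟩

/-- Lowering `l` by `ρ` makes the initial ordering strict, which absorbs the errors `ε`. -/
lemma ApproxSol.propagate_of_expNonneg {ρ : ℝ} (hx : H.ApproxSol ε M K t₀ x x')
    (hy : H.ApproxSol ε M K t₀ y y') (hM : 0 < M) (hρ : 0 < ρ) (hl : l - ρ ∈ Icc 0 1)
    (hε : 4 * ε ≤ H.η * (Real.exp (-(H.B * T)) * (ρ * M)))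
    (hrate : ∀ i t, t₀ ≤ t → H.expRate y y' i t ∈ Icc (H.η * M / 2) (H.rateBound K))
    (ht₁ : t₀ + H.R ≤ t₁) (hw : H.ExpNonneg (x - l • y) (x' - l • y') t₁)
    (ht : t ∈ Icc t₁ (t₁ + T)) (i : Fin m) :
    0 ≤ (x - (l - ρ) • y) t i ∧
      H.η / 2 * (x - (l - ρ) • y) t i +
          β i t * ((l - ρ) * (1 - (l - ρ)) * H.sublinearity M K) ≤
        H.expRate (x - (l - ρ) • y) (x' - (l - ρ) • y') i t := by
  have hR := H.R_pos
  have hη := H.η_pos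
  have hstrict : ∀ i, ∀ u ∈ Icc (t₁ - H.R) t₁, ρ * M ≤ (x - (l - ρ) • y) u i ∧
      0 < H.expRate (x - (l - ρ) • y) (x' - (l - ρ) • y') i u := fun i u hu => by
    obtain ⟨hw, hwrate⟩ := hw i u hu
    have hMy := (hy.mem_Icc i u (by linarith [hu.1])).1
    have hyrate := (hrate i u (by linarith [hu.1])).1
    have hyrate₀ : 0 < H.expRate y y' i u := lt_of_lt_of_le (by positivity) hyrate
    rw [expRate_sub_smul] at hwrate ⊢
    simp only [Pi.sub_apply, Pi.smul_apply, smul_eq_mul] at hw ⊢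
    constructor <;> nlinarith
  obtain ⟨hlower, hge⟩ := hx.propagate hy hM hl ht₁ (by positivity) hε hstrict ht i
  exact ⟨le_trans (by positivity) hlower, hge⟩

lemma ApproxSol.expNonneg_sub_smul_add {G g δ : ℝ} (hy : H.ApproxSol ε M K t₀ y y')
    (hrate : ∀ i t, t₀ ≤ t → H.expRate y y' i t ∈ Icc (H.η * M / 2) (H.rateBound K))
    (hδ : 0 ≤ δ) (hδK : K * δ ≤ G) (hδrate : H.rateBound K * δ ≤ H.η / 2 * G) (hg : 0 ≤ g)
    (ht : t₀ + H.R ≤ t) (hG : ∀ i, ∀ u ∈ Icc (t - H.R) t, G ≤ (x - l • y) u i)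
    (hge : ∀ i, ∀ u ∈ Icc (t - H.R) t,
      H.η / 2 * (x - l • y) u i + β i u * g ≤ H.expRate (x - l • y) (x' - l • y') i u) :
    H.ExpNonneg (x - (l + δ) • y) (x' - (l + δ) • y') t := by
  intro i u hu
  have hR := H.R_pos
  have hG := hG i u hu
  have hge := hge i u hu
  have hyK := mul_le_mul_of_nonneg_left (hy.mem_Icc i u (by linarith [hu.1])).2 hδ
  have hyrate := mul_le_mul_of_nonneg_left (hrate i u (by linarith [hu.1])).2 hδ
  have hdrift := mul_le_mul_of_nonneg_left hG (half_pos H.η_pos).le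
  have hbirth := mul_nonneg (H.β_pos i u).le hg
  rw [expRate_sub_smul] at hge ⊢
  simp only [Pi.sub_apply, Pi.smul_apply, smul_eq_mul] at hG hge hdrift ⊢
  constructor <;> linarith

lemma ApproxSol.expNonneg_improve {ρ δ g : ℝ} (hx : H.ApproxSol ε M K t₀ x x')
    (hy : H.ApproxSol ε M K t₀ y y') (hM : 0 < M) (hρ : 0 < ρ) (hl : l - ρ ∈ Icc 0 1)
    (hε : 4 * ε ≤ H.η * (Real.exp (-(H.B * (H.L + H.R))) * (ρ * M)))
    (hrate : ∀ i t, t₀ ≤ t → H.expRate y y' i t ∈ Icc (H.η * M / 2) (H.rateBound K))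
    (hg : 0 ≤ g) (hgl : g ≤ (l - ρ) * (1 - (l - ρ)) * H.sublinearity M K)
    (hδ : 0 ≤ δ) (hδK : K * δ ≤ Real.exp (-(H.B * (H.L + H.R))) * (g * H.κ))
    (hδrate : H.rateBound K * δ ≤ H.η / 2 * (Real.exp (-(H.B * (H.L + H.R))) * (g * H.κ)))
    (ht₁ : t₀ + H.R ≤ t₁) (hw : H.ExpNonneg (x - l • y) (x' - l • y') t₁) :
    H.ExpNonneg (x - (l - ρ + δ) • y) (x' - (l - ρ + δ) • y') (t₁ + (H.L + H.R)) := by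
  have hL := H.L_pos
  have hR := H.R_pos
  have hη := H.η_pos
  have hpropagate : ∀ i, ∀ u ∈ Icc t₁ (t₁ + (H.L + H.R)), 0 ≤ (x - (l - ρ) • y) u i ∧
      H.η / 2 * (x - (l - ρ) • y) u i + β i u * g ≤
        H.expRate (x - (l - ρ) • y) (x' - (l - ρ) • y') i u := fun i u hu => by
    obtain ⟨hw, hge⟩ := hx.propagate_of_expNonneg hy hM hρ hl hε hrate ht₁ hw hu i
    exact ⟨hw, by linarith [mul_le_mul_of_nonneg_left hgl (H.β_pos i u).le]⟩
  refine hy.expNonneg_sub_smul_add hrate hδ hδK hδrate hg (by linarith) (fun i u hu => ?_)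
    fun i u hu => (hpropagate i u ⟨by linarith [hu.1], hu.2⟩).2
  refine H.le_of_mul_birth_le_expRate hg ⟨by linarith [hu.1], hu.2⟩
    (fun v hv => hx.hasDerivAt_sub_smul hy (l - ρ) i (by linarith [hv.1])) (fun v hv => ?_)
    (hpropagate i t₁ ⟨le_rfl, by linarith⟩).1
  obtain ⟨hw, hge⟩ := hpropagate i v ⟨hv.1, hv.2.trans hu.2⟩
  linarith [mul_nonneg (half_pos hη).le hw]

lemma exists_improvement (H : StabilityConstants d a β c r) {l₀ ζ : ℝ} (hM : 0 < M) (K : ℝ)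
    (hl₀ : 0 < l₀) (hζ : 0 < ζ) :
    ∃ γ > 0, ∀ᶠ ε in 𝓝[>] (0 : ℝ), ∀ x x' y y' t₀ t₁ l, H.ApproxSol ε M K t₀ x x' →
      H.ApproxSol ε M K t₀ y y' → t₀ + H.R ≤ t₁ → l ∈ Icc l₀ (1 - ζ) →
      H.ExpNonneg (x - l • y) (x' - l • y') t₁ →
      H.ExpNonneg (x - (l + γ) • y) (x' - (l + γ) • y') (t₁ + (H.L + H.R)) := by
  have hη := H.η_pos
  have hκ := H.κ_pos
  have hL := H.L_pos
  have hR := H.R_pos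
  have hσ := H.sublinearity_pos hM (K := K)
  set E := Real.exp (-(H.B * (H.L + H.R)))
  have hE : 0 < E := Real.exp_pos _
  set g := l₀ / 2 * ζ * H.sublinearity M K with hg
  have hG : 0 < E * (g * H.κ) := by positivity
  obtain ⟨δ, ⟨hδK, hδrate⟩, hδ : 0 < δ⟩ := ((eventually_mul_le (C := K) hG).and
    (eventually_mul_le (C := H.rateBound K) (mul_pos (half_pos hη) hG))).and
    self_mem_nhdsWithin |>.exists
  set C := 4 / (H.η * E * M) with hC
  refine ⟨δ / 2, half_pos hδ, ?_⟩
  filter_upwards [H.eventually_expRate_mem_Icc hM K, eventually_mul_le (C := C) (half_pos hδ),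
    eventually_mul_le (C := C) (half_pos hl₀), self_mem_nhdsWithin]
    with ε hrate hCδ hCl (hε : 0 < ε) x x' y y' t₀ t₁ l hx hy ht₁ hl hw
  have hρ : 0 < C * ε := by positivity
  have habsorb : 4 * ε ≤ H.η * (E * (C * ε * M)) := le_of_eq (by rw [hC]; field_simp)
  have hgl : g ≤ (l - C * ε) * (1 - (l - C * ε)) * H.sublinearity M K := by
    rw [hg]
    gcongr ?_ * ?_ * _ <;> linarith [hl.1, hl.2]
  refine (hx.expNonneg_improve hy hM hρ ⟨by linarith [hl.1], by linarith [hl.2]⟩ habsorb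
    (hrate y y' t₀ hy) (by positivity) hgl hδ.le hδK hδrate ht₁ hw).mono ?_ (by linarith)
  exact hy.expNonneg hM.le (hrate y y' t₀ hy) (by linarith)

lemma exists_expNonneg_sub_smul (H : StabilityConstants d a β c r) (hM : 0 < M) (K : ℝ) :
    ∃ l > (0 : ℝ), ∀ᶠ ε in 𝓝[>] (0 : ℝ), ∀ x x' y y' t₀ t, H.ApproxSol ε M K t₀ x x' →
      H.ApproxSol ε M K t₀ y y' → t₀ + H.R ≤ t → H.ExpNonneg (x - l • y) (x' - l • y') t := by
  have hη := H.η_pos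
  have hR := H.R_pos
  obtain ⟨l, ⟨hlK, hlrate⟩, hl : 0 < l⟩ := ((eventually_mul_le (C := K) hM).and
    (eventually_mul_le (C := H.rateBound K) (b := H.η * M / 2) (by positivity))).and
    self_mem_nhdsWithin |>.exists
  refine ⟨l, hl, ?_⟩
  filter_upwards [H.eventually_expRate_mem_Icc hM K] with ε hrate x x' y y' t₀ t hx hy ht i u hu
  have hxM := (hx.mem_Icc i u (by linarith [hu.1])).1
  have hyK := mul_le_mul_of_nonneg_left (hy.mem_Icc i u (by linarith [hu.1])).2 hl.le
  have hxrate := (hrate x x' t₀ hx i u (by linarith [hu.1])).1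
  have hyrate := mul_le_mul_of_nonneg_left (hrate y y' t₀ hy i u (by linarith [hu.1])).2 hl.le
  rw [expRate_sub_smul]
  simp only [Pi.sub_apply, Pi.smul_apply, smul_eq_mul]
  constructor <;> linarith

lemma exists_one_sub_mul_le (H : StabilityConstants d a β c r) {ζ : ℝ} (hM : 0 < M) (K : ℝ)
    (hζ : 0 < ζ) :
    ∃ ε > 0, ∃ T, ∀ x x' y y' t₀, H.ApproxSol ε M K t₀ x x' → H.ApproxSol ε M K t₀ y y' →
      ∀ t, t₀ + T ≤ t → ∀ i, (1 - ζ) * y t i ≤ x t i := by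
  have hL := H.L_pos
  have hR := H.R_pos
  obtain ⟨l₀, hl₀, hstart⟩ := H.exists_expNonneg_sub_smul hM K
  obtain ⟨γ, hγ, himprove⟩ := H.exists_improvement hM K hl₀ hζ
  obtain ⟨N, hN⟩ := exists_nat_ge (1 / γ)
  rw [div_le_iff₀ hγ] at hN
  obtain ⟨ε, ⟨⟨hstart, himprove⟩, hrate⟩, hε⟩ := ((hstart.and himprove).and
    (H.eventually_expRate_mem_Icc hM K)).and self_mem_nhdsWithin |>.exists
  refine ⟨ε, hε, H.R + N * (H.L + H.R), fun x x' y y' t₀ hx hy t ht i => ?_⟩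
  have hiterate := forall_le_of_improvement
    (P := fun l t => H.ExpNonneg (x - l • y) (x' - l • y') t) (s₀ := t₀ + H.R)
    (by linarith : 0 ≤ H.L + H.R) hγ.le
    (fun s hs l l' hl hw => hw.mono (hy.expNonneg hM.le (hrate y y' t₀ hy) hs) hl)
    (fun s hs => hstart x x' y y' t₀ s hx hy hs)
    (fun s hs l hl hw => himprove x x' y y' t₀ s l hx hy hs hl hw)
  have hfinal := hiterate N (s := t - N * (H.L + H.R)) (by linarith) (1 - ζ) le_rfl (by linarith)
  rw [sub_add_cancel] at hfinal
  have hw := (hfinal i t ⟨by linarith, le_rfl⟩).1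
  simp only [Pi.sub_apply, Pi.smul_apply, smul_eq_mul] at hw
  linarith

lemma exists_abs_sub_lt (H : StabilityConstants d a β c r) {e : ℝ} (hM : 0 < M) (hK : 0 < K)
    (he : 0 < e) :
    ∃ ε > 0, ∃ T ≥ 0, ∀ x x' y y' t₀, H.ApproxSol ε M K t₀ x x' → H.ApproxSol ε M K t₀ y y' →
      ∀ t, t₀ + T ≤ t → ∀ i, |x t i - y t i| < e := by
  have hR := H.R_pos
  obtain ⟨ε, hε, T, hcompare⟩ := H.exists_one_sub_mul_le hM K (ζ := e / (2 * K)) (by positivity)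
  refine ⟨ε, hε, max T 0, le_max_right _ _, fun x x' y y' t₀ hx hy t ht i => ?_⟩
  have hT := le_max_left T 0
  have hT₀ := le_max_right T 0
  have hxy := hcompare x x' y y' t₀ hx hy t (by linarith) i
  have hyx := hcompare y y' x x' t₀ hy hx t (by linarith) i
  have hscaled : ∀ z ≤ K, e / (2 * K) * z < e := fun z hz => by
    calc e / (2 * K) * z ≤ e / (2 * K) * K := by gcongr
      _ = e / 2 := by field_simp
      _ < e := half_lt_self he
  have hxK := hscaled _ (hx.mem_Icc i t (by linarith)).2
  have hyK := hscaled _ (hy.mem_Icc i t (by linarith)).2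
  rw [abs_lt]
  constructor <;> linarith

end StabilityConstants

end Contraction

/-! ### Solutions of the initial value problem -/

section Solutions

variable {m : ℕ} {d : Fin m → ℝ → ℝ} {a : Fin m → Fin m → ℝ → ℝ} {β c : Fin m → ℝ → ℝ}
  {r : Fin m → ℝ} {y : ℝ → Fin m → ℝ} {t₀ : ℝ}

lemma hasDerivAt_of_hasDerivWithinAt_Ici {f f' : ℝ → ℝ} {t : ℝ} (hf : ContinuousOn f (Ici t₀))
    (hf' : ContinuousOn f' (Ici t₀))
    (hderiv : ∀ u, t₀ ≤ u → HasDerivWithinAt f (f' u) (Ici u) u) (ht : t₀ < t) :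
    HasDerivAt f (f' t) t := by
  have hint : ∀ u, t₀ ≤ u → IntervalIntegrable f' volume t₀ u := fun u hu =>
    (hf'.mono (by rw [uIcc_of_le hu]; exact Icc_subset_Ici_self)).intervalIntegrable
  have hftc : ∀ u, t₀ ≤ u → f u = f t₀ + ∫ w in t₀..u, f' w := fun u hu => by
    rw [intervalIntegral.integral_eq_sub_of_hasDeriv_right_of_le hu
      (hf.mono Icc_subset_Ici_self)
      (fun w hw => (hderiv w hw.1.le).mono Ioi_subset_Ici_self) (hint u hu), add_sub_cancel]
  have hprimitive : HasDerivAt (fun u => f t₀ + ∫ w in t₀..u, f' w) (f' t) t :=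
    (intervalIntegral.integral_hasDerivAt_right (hint t ht.le)
      ((hf'.mono Ioi_subset_Ici_self).stronglyMeasurableAtFilter isOpen_Ioi t ht)
      (hf'.continuousAt (Ici_mem_nhds ht))).const_add _
  refine hprimitive.congr_of_eventuallyEq ?_
  filter_upwards [Ioi_mem_nhds ht] with u hu using hftc u hu.le

lemma SolN.hasDerivAt {φ : XN m r} (hy : SolN d a β c r φ y) (hA : Admissible d a β c)
    (hr : ∀ i, 0 < r i) (i : Fin m) {t : ℝ} (ht : 0 < t) :
    HasDerivAt (fun u => y u i) (rhs d a β c r i t y) t :=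
  hasDerivAt_of_hasDerivWithinAt_Ici
    ((hy.1 i).mono (Ici_subset_Ici.2 (neg_nonpos.2 (hr i).le)))
    (hA.continuousOn_rhs hr (by simpa using hy.1) i) (hy.2.2 i) ht

lemma Admissible.pos_of_hasDerivWithinAt_absRhs (hA : Admissible d a β c) (hy : Continuous y)
    (hpast : ∀ t ≤ 0, ∀ i, 0 < y t i)
    (hderiv : ∀ t, 0 ≤ t → HasDerivWithinAt y (absRhs d a β c r y t) (Ici t) t) (t : ℝ)
    (i : Fin m) : 0 < y t i := by
  rcases le_total t 0 with ht | ht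
  · exact hpast t ht i
  have hdcont := (hA.almostPeriodic_d i).1
  have hgain : ∀ u, 0 ≤ absRhs d a β c r y u i + d i u * y u i := fun u => by
    have hcoupling : 0 ≤ ∑ j, a i j u * |y u j| :=
      Finset.sum_nonneg fun j _ => mul_nonneg (hA.a_nonneg i j u) (abs_nonneg _)
    have hbirth : 0 ≤ β i u * ricker (c i u) |y (u - r i) i| :=
      mul_nonneg (hA.β_pos i u).le (ricker_nonneg (abs_nonneg _))
    unfold absRhs
    linarith
  have hycomp : Continuous fun u => y u i := (continuous_apply i).comp hy
  have hgrow := exp_mul_add_le_exp_mul (v := fun u => y u i)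
    (v' := fun u => absRhs d a β c r y u i) (P := fun u => ∫ w in 0..u, d i w) (p := d i)
    (Q := fun _ => 0) (q := fun _ => 0) ht hycomp.continuousOn
    (fun u hu => hasDerivAt_of_hasDerivWithinAt_Ici hycomp.continuousOn
      ((continuous_apply i).comp (hA.continuous_absRhs hy)).continuousOn
      (fun w hw => hasDerivWithinAt_pi.1 (hderiv w hw) i) hu.1)
    (fun u => (hdcont.integral_hasStrictDerivAt 0 u).hasDerivAt)
    (fun u => hasDerivAt_const u 0) (fun u _ => mul_nonneg (Real.exp_pos _).le (hgain u))
  simp only [intervalIntegral.integral_same, Real.exp_zero, one_mul, sub_self, add_zero] at hgrow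
  exact pos_of_mul_pos_right ((hpast 0 le_rfl i).trans_le hgrow) (Real.exp_pos _).le

lemma StabilityConstants.exists_solN_one (H : StabilityConstants d a β c r) :
    ∃ y, SolN d a β c r (fun _ _ => 1) y := by
  have hB := H.B_pos
  have hconst : ∀ s, 0 ≤ s → ‖absRhs d a β c r (fun _ => 1) s‖ ≤ (m + 2) * H.B := fun s hs => by
    have hzero : absRhs d a β c r 0 s = 0 := by
      ext i
      simp [absRhs, ricker]
    simpa [hzero] using H.causalLipschitz_absRhs (fun _ => 1) 0 s 1 hs fun u _ => by
      rw [Pi.zero_apply, sub_zero]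
      exact (pi_norm_const_le (1 : ℝ)).trans_eq norm_one
  obtain ⟨y, hcont, hpast, hderiv⟩ := exists_solution_of_causal_lipschitz (by positivity)
    (fun _ => H.continuous_absRhs) H.causalLipschitz_absRhs hconst
  have hpos := H.pos_of_hasDerivWithinAt_absRhs hcont
    (fun t ht i => by rw [hpast t ht]; exact one_pos) hderiv
  refine ⟨y, fun i => ((continuous_apply i).comp hcont).continuousOn,
    fun i s => by rw [hpast s s.2.2]; rfl, fun i t ht => ?_⟩
  rw [← absRhs_eq_rhs (fun j => (hpos t j).le) (hpos _ i).le]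
  exact hasDerivWithinAt_pi.1 (hderiv t ht) i

lemma Admissible.exists_dissipation [Nonempty (Fin m)] (hA : Admissible d a β c) :
    ∃ δ, AlmostPeriodic δ ∧ (∀ t, 0 < δ t) ∧ ∀ i t, δ t ≤ d i t - ∑ j, a j i t := by
  refine ⟨Finset.univ.inf' Finset.univ_nonempty fun i => d i - ∑ j, a j i, ?_, fun t => ?_,
    fun i t => ?_⟩
  · exact Finset.inf'_induction _ _ (fun f hf g hg => hf.inf hg) fun i _ =>
      (hA.almostPeriodic_d i).sub (AlmostPeriodic.sum fun j _ => hA.almostPeriodic_a j i)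
  · rw [Finset.inf'_apply, Finset.lt_inf'_iff]
    exact fun i _ => by simpa using hA.dissipative i t
  · rw [Finset.inf'_apply]
    exact (Finset.inf'_le _ (Finset.mem_univ i)).trans_eq (by simp)

lemma sum_rhs_eq (t : ℝ) (y : ℝ → Fin m → ℝ) :
    ∑ i, rhs d a β c r i t y = -∑ i, (d i t - ∑ j, a j i t) * y t i +
      ∑ i, β i t * ricker (c i t) (y (t - r i) i) := by
  have hcoupling : ∑ i, ∑ j, a i j t * y t j = ∑ i, (∑ j, a j i t) * y t i := by
    rw [Finset.sum_comm]
    simp only [Finset.sum_mul]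
  simp only [rhs_eq_ricker, Finset.sum_add_distrib, hcoupling, sub_mul, Finset.sum_sub_distrib,
    neg_mul, Finset.sum_neg_distrib]
  ring

lemma StabilityConstants.exists_forall_le (H : StabilityConstants d a β c r)
    (hderiv : ∀ i t, t₀ ≤ t → HasDerivAt (fun u => y u i) (rhs d a β c r i t y) t)
    (hy : ∀ i t, t₀ ≤ t → 0 ≤ y t i) : ∃ K, ∀ i t, t₀ ≤ t → y t i ≤ K := by
  rcases isEmpty_or_nonempty (Fin m) with _ | _
  · exact ⟨0, fun i => isEmptyElim i⟩
  obtain ⟨δ, hδ, hδpos, hδle⟩ := H.exists_dissipation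
  obtain ⟨L, hL, κ, hκ, hwindow⟩ := hδ.exists_le_integral (fun t => (hδpos t).le) (hδpos 0)
  have hB := H.B_pos
  have hc₀ := H.c₀_pos
  have hbirth : ∀ t, ∑ i, β i t * ricker (c i t) (y (t - r i) i) ≤ m * (H.B * (1 / H.c₀)) := by
    intro t
    have hterm : ∀ i ∈ Finset.univ, β i t * ricker (c i t) (y (t - r i) i) ≤ H.B * (1 / H.c₀) :=
      fun i _ => mul_le_mul_of_nonneg (H.β_le i t)
        ((ricker_le_one_div (H.c_pos i t)).trans (one_div_le_one_div_of_le hc₀ (H.c_ge i t)))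
        (H.β_pos i t).le (by positivity)
    simpa using Finset.sum_le_sum hterm
  have hdecay : ∀ t, t₀ ≤ t → δ t * ∑ i, y t i ≤ ∑ i, (d i t - ∑ j, a j i t) * y t i := by
    intro t ht
    rw [Finset.mul_sum]
    exact Finset.sum_le_sum fun i _ => mul_le_mul_of_nonneg_right (hδle i t) (hy i t ht)
  obtain ⟨K, hK⟩ := exists_le_of_deriv_le_neg_mul_add (S := fun t => ∑ i, y t i)
    (S' := fun t => ∑ i, rhs d a β c r i t y) (C := m * (H.B * (1 / H.c₀))) hδ.1
    (fun t => (hδpos t).le) (by positivity) hL hκ hwindow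
    (fun t ht => Finset.sum_nonneg fun i _ => hy i t ht)
    (fun t ht => HasDerivAt.fun_sum fun i _ => hderiv i t ht)
    (fun t ht => by rw [sum_rhs_eq]; linarith [hbirth t, hdecay t ht])
  exact ⟨K, fun i t ht => (Finset.single_le_sum (f := y t) (fun j _ => hy j t ht)
    (Finset.mem_univ i)).trans (hK t ht)⟩

end Solutions

/-! ### The almost periodic attractor -/

section Attractor

variable {m : ℕ} {d : Fin m → ℝ → ℝ} {a : Fin m → Fin m → ℝ → ℝ} {β c : Fin m → ℝ → ℝ}
  {r : Fin m → ℝ}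

namespace StabilityConstants

variable {H : StabilityConstants d a β c r} {x x' y b : ℝ → Fin m → ℝ}
  {ε ε' M M' K K' t₀ t₁ t s : ℝ} {i : Fin m}

lemma ApproxSol.mono_left (hx : H.ApproxSol ε M K t₀ x x') (ht : t₀ ≤ t₁) :
    H.ApproxSol ε M K t₁ x x' where
  hasDerivAt i t ht₁ := hx.hasDerivAt i t (ht.trans ht₁)
  continuousOn i := (hx.continuousOn i).mono (Ici_subset_Ici.2 ht)
  abs_sub_rhs_le i t ht₁ := hx.abs_sub_rhs_le i t (ht.trans ht₁)
  mem_Icc i t ht₁ := hx.mem_Icc i t ((sub_le_sub_right ht _).trans ht₁)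

lemma ApproxSol.weaken (hx : H.ApproxSol ε M K t₀ x x') (hε : ε ≤ ε') (hM : M' ≤ M)
    (hK : K ≤ K') : H.ApproxSol ε' M' K' t₀ x x' where
  hasDerivAt := hx.hasDerivAt
  continuousOn := hx.continuousOn
  abs_sub_rhs_le i t ht := (hx.abs_sub_rhs_le i t ht).trans hε
  mem_Icc i t ht := Icc_subset_Icc hM hK (hx.mem_Icc i t ht)

lemma approxSol_of_hasDerivAt (H : StabilityConstants d a β c r)
    (hderiv : ∀ i t, t₀ - H.R ≤ t → HasDerivAt (fun u => y u i) (rhs d a β c r i t y) t)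
    (hy : ∀ i t, t₀ - H.R ≤ t → y t i ∈ Icc M K) :
    H.ApproxSol 0 M K t₀ y fun t i => rhs d a β c r i t y where
  hasDerivAt i t ht := hderiv i t (by linarith [H.R_pos])
  continuousOn := H.continuousOn_rhs H.r_pos fun i t ht =>
    (hderiv i t ((sub_le_sub_left (H.r_le i) t₀).trans ht)).continuousAt.continuousWithinAt
  abs_sub_rhs_le i t _ := by simp
  mem_Icc := hy

lemma approxSol_of_entireSolN (H : StabilityConstants d a β c r) (hb : EntireSolN d a β c r b)
    (hmem : ∀ i t, b t i ∈ Icc M K) (t₀ : ℝ) :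
    H.ApproxSol 0 M K t₀ b fun t i => rhs d a β c r i t b :=
  H.approxSol_of_hasDerivAt (fun i t _ => hb i t) fun i t _ => hmem i t

lemma exists_approxSol_of_solN (H : StabilityConstants d a β c r) {φ : XN m r}
    (hy : SolN d a β c r φ y) (hM : 0 ≤ M) (hlower : ∀ t, t₀ ≤ t → ∀ i, M ≤ y t i) :
    ∃ t₁, ∃ K > 0, H.ApproxSol 0 M K t₁ y fun t i => rhs d a β c r i t y := by
  set t₂ := max t₀ 1
  have hderiv : ∀ i t, t₂ ≤ t → HasDerivAt (fun u => y u i) (rhs d a β c r i t y) t :=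
    fun i t ht => hy.hasDerivAt H.toAdmissible H.r_pos i
      (zero_lt_one.trans_le ((le_max_right _ _).trans ht))
  have hge : ∀ i t, t₂ ≤ t → M ≤ y t i := fun i t ht => hlower t ((le_max_left _ _).trans ht) i
  obtain ⟨K, hK⟩ := H.exists_forall_le hderiv fun i t ht => hM.trans (hge i t ht)
  refine ⟨t₂ + H.R, max K 1, by positivity, H.approxSol_of_hasDerivAt ?_ ?_⟩
  · exact fun i t ht => hderiv i t (by linarith)
  · exact fun i t ht => ⟨hge i t (by linarith), (hK i t (by linarith)).trans (le_max_left _ _)⟩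

lemma abs_rhs_add_sub_rhs_le (H : StabilityConstants d a β c r)
    (hs : ∀ k t, |coeff d a β c k (t + s) - coeff d a β c k t| < ε)
    (hnow : ∀ j, y (t + s) j ∈ Icc 0 K) (hdelay : y (t + s - r i) i ∈ Icc 0 K) :
    |rhs d a β c r i (t + s) y - rhs d a β c r i t fun u => y (u + s)| ≤
      ε * ((m + 2 + H.B * K) * K) := by
  set w := y (t + s - r i) i with hw
  have hε : 0 ≤ ε := (abs_nonneg _).trans (hs (.inl i) 0).le
  have hK : 0 ≤ K := hdelay.1.trans hdelay.2
  have hterm : ∀ k, ∀ z ∈ Icc 0 K,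
      |(coeff d a β c k (t + s) - coeff d a β c k t) * z| ≤ ε * K := fun k z hz => by
    rw [abs_mul, abs_of_nonneg hz.1]
    exact mul_le_mul (hs k t).le hz.2 hz.1 hε
  have hloss : |(d i (t + s) - d i t) * y (t + s) i| ≤ ε * K := hterm (.inl i) _ (hnow i)
  have hcoupling : |∑ j, (a i j (t + s) - a i j t) * y (t + s) j| ≤ m * (ε * K) := by
    have hsum := Finset.sum_le_sum fun j (_ : j ∈ Finset.univ) =>
      hterm (.inr (.inl (i, j))) _ (hnow j)
    simpa [coeff] using (Finset.abs_sum_le_sum_abs _ _).trans hsum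
  have hbirth : |(β i (t + s) - β i t) * ricker (c i (t + s)) w| ≤ ε * K :=
    hterm (.inr (.inr (.inl i))) _
      ⟨ricker_nonneg hdelay.1, (ricker_le_self (H.c_pos i _).le hdelay.1).trans hdelay.2⟩
  have hcrowding : |β i t * (ricker (c i (t + s)) w - ricker (c i t) w)| ≤
      H.B * (K * (ε * K)) := by
    rw [abs_mul, abs_of_pos (H.β_pos i t)]
    refine mul_le_mul_of_nonneg (H.β_le i t) ?_ (H.β_pos i t).le (by positivity)
    exact (abs_ricker_sub_ricker_le_abs_sub_mul (H.c_pos i _).le (H.c_pos i _).le hdelay.1).trans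
      (mul_le_mul_of_nonneg hdelay.2 (hterm (.inr (.inr (.inr i))) _ hdelay) hdelay.1
        (by positivity))
  have hsplit : rhs d a β c r i (t + s) y - rhs d a β c r i t (fun u => y (u + s)) =
      -((d i (t + s) - d i t) * y (t + s) i) + ∑ j, (a i j (t + s) - a i j t) * y (t + s) j +
      (β i (t + s) - β i t) * ricker (c i (t + s)) w +
      β i t * (ricker (c i (t + s)) w - ricker (c i t) w) := by
    simp only [rhs_eq_ricker, sub_mul, Finset.sum_sub_distrib, sub_add_eq_add_sub, ← hw]
    ring
  rw [hsplit]
  rw [abs_le] at *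
  constructor <;> linarith

lemma ApproxSol.comp_add_const (hM : 0 ≤ M)
    (hy : H.ApproxSol 0 M K t₀ y fun t i => rhs d a β c r i t y)
    (hs : ∀ k t, |coeff d a β c k (t + s) - coeff d a β c k t| < ε) :
    H.ApproxSol (ε * ((m + 2 + H.B * K) * K)) M K (t₀ - s) (fun t => y (t + s))
      fun t i => rhs d a β c r i (t + s) y where
  hasDerivAt i t ht := (hy.hasDerivAt i (t + s) (by linarith)).comp_add_const t s
  continuousOn i := (hy.continuousOn i).comp (f := fun u => u + s) (by fun_prop)
    fun u (hu : t₀ - s ≤ u) => show t₀ ≤ u + s from sub_le_iff_le_add.1 hu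
  abs_sub_rhs_le i t ht := by
    have hmem : ∀ j u, t + s - H.R ≤ u → y u j ∈ Icc 0 K := fun j u hu =>
      Icc_subset_Icc_left hM (hy.mem_Icc j u (by linarith))
    exact H.abs_rhs_add_sub_rhs_le hs (fun j => hmem j _ (by linarith [H.R_pos]))
      (hmem i _ (by linarith [H.r_le i]))
  mem_Icc i t ht := hy.mem_Icc i _ (by linarith)

section Limit

variable {x x' : ℕ → ℝ → Fin m → ℝ} {ε τ : ℕ → ℝ}

lemma uniformCauchySeqOn_of_approxSol (hM : 0 < M) (hK : 0 < K) (hε : Tendsto ε atTop (𝓝 0))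
    (hτ : Tendsto τ atTop atBot) (hx : ∀ n, H.ApproxSol (ε n) M K (τ n) (x n) (x' n)) (A : ℝ) :
    UniformCauchySeqOn x atTop (Ici A) := by
  refine Metric.uniformCauchySeqOn_iff.2 fun e he => ?_
  obtain ⟨ε₁, hε₁, T, -, hclose⟩ := H.exists_abs_sub_lt hM hK he
  obtain ⟨N, hN⟩ := eventually_atTop.1 <|
    (hε.eventually_le_const hε₁).and (hτ.eventually (eventually_le_atBot (A - T)))
  have happrox : ∀ n ≥ N, H.ApproxSol ε₁ M K (A - T) (x n) (x' n) := fun n hn =>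
    ((hx n).mono_left (hN n hn).2).weaken (hN n hn).1 le_rfl le_rfl
  exact ⟨N, fun n hn k hk t ht => (dist_pi_lt_iff he).2 fun i =>
    hclose _ _ _ _ _ (happrox n hn) (happrox k hk) t ((sub_add_cancel A T).trans_le ht) i⟩

lemma tendstoUniformlyOn_deriv_of_approxSol (hM : 0 ≤ M) (hε : Tendsto ε atTop (𝓝 0))
    (hτ : Tendsto τ atTop atBot) (hx : ∀ n, H.ApproxSol (ε n) M K (τ n) (x n) (x' n))
    (hb : ∀ t i, 0 ≤ b t i) (hlim : ∀ A, TendstoUniformlyOn x b atTop (Ici A)) (A : ℝ)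
    (i : Fin m) :
    TendstoUniformlyOn (fun n u => x' n u i) (fun u => rhs d a β c r i u b) atTop (Ici A) := by
  refine Metric.tendstoUniformlyOn_iff.2 fun e he => ?_
  have hC : 0 < (m + 2) * H.B := mul_pos (by positivity) H.B_pos
  filter_upwards [hτ.eventually (eventually_le_atBot A), hε.eventually_lt_const (half_pos he),
    Metric.tendstoUniformlyOn_iff.1 (hlim (A - H.R)) (e / 2 / ((m + 2) * H.B)) (by positivity)]
    with n hτn hεn hclose u (hu : A ≤ u)
  have hri := H.r_le i
  have hcomp : ∀ v, A - H.R ≤ v → ∀ j, |b v j - x n v j| ≤ e / 2 / ((m + 2) * H.B) :=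
    fun v hv j => (dist_le_pi_dist (b v) (x n v) j).trans (hclose v hv).le
  have hrhs := H.abs_rhs_sub_le (x := b) (y := x n) (t := u) (i := i) (fun v _ => hb v)
    (fun v hv j => hM.trans ((hx n).mem_Icc j v (by linarith)).1)
    (hcomp u (by linarith [H.R_pos])) (hcomp _ (by linarith) i)
  rw [mul_div_cancel₀ _ hC.ne'] at hrhs
  calc |rhs d a β c r i u b - x' n u i|
      ≤ |rhs d a β c r i u b - rhs d a β c r i u (x n)| + |rhs d a β c r i u (x n) - x' n u i| :=
        abs_sub_le _ _ _
    _ ≤ e / 2 + ε n := add_le_add hrhs (by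
        rw [abs_sub_comm]; exact (hx n).abs_sub_rhs_le i u (hτn.trans hu))
    _ < e := by linarith

lemma exists_entireSolN_of_approxSol (hM : 0 < M) (hK : 0 < K) (hε : Tendsto ε atTop (𝓝 0))
    (hτ : Tendsto τ atTop atBot) (hx : ∀ n, H.ApproxSol (ε n) M K (τ n) (x n) (x' n)) :
    ∃ b, EntireSolN d a β c r b ∧ ∀ i t, b t i ∈ Icc M K := by
  have hcauchy := uniformCauchySeqOn_of_approxSol hM hK hε hτ hx
  choose b hb using fun t => cauchySeq_tendsto_of_complete ((hcauchy t).cauchySeq self_mem_Ici)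
  have hlim : ∀ A, TendstoUniformlyOn x b atTop (Ici A) := fun A =>
    (hcauchy A).tendstoUniformlyOn_of_tendsto fun t _ => hb t
  have hbi : ∀ i t, Tendsto (fun n => x n t i) atTop (𝓝 (b t i)) := fun i t =>
    tendsto_pi_nhds.1 (hb t) i
  have hmem : ∀ i t, b t i ∈ Icc M K := fun i t => by
    refine isClosed_Icc.mem_of_tendsto (hbi i t) ?_
    filter_upwards [hτ.eventually (eventually_le_atBot t)] with n hn
    exact (hx n).mem_Icc i t (by linarith [H.R_pos])
  refine ⟨b, fun i t => ?_, hmem⟩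
  refine hasDerivAt_of_tendstoUniformlyOn isOpen_Ioi
    ((tendstoUniformlyOn_deriv_of_approxSol hM.le hε hτ hx
      (fun t i => hM.le.trans (hmem i t).1) hlim (t - 1) i).mono Ioi_subset_Ici_self)
    ?_ (fun u _ => hbi i u) (show t ∈ Ioi (t - 1) from sub_one_lt t)
  filter_upwards [hτ.eventually (eventually_le_atBot (t - 1))] with n hn u hu
  exact (hx n).hasDerivAt i u (hn.trans (le_of_lt hu))

end Limit

lemma ApproxSol.exists_entireSolN (hM : 0 < M) (hK : 0 < K)
    (hy : H.ApproxSol 0 M K t₀ y fun t i => rhs d a β c r i t y) :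
    ∃ b, EntireSolN d a β c r b ∧ ∀ i t, b t i ∈ Icc M K := by
  have hperiod : ∀ n : ℕ, ∃ s : ℝ, n ≤ s ∧
      ∀ k t, |coeff d a β c k (t + s) - coeff d a β c k t| < 1 / ((n : ℝ) + 1) := fun n => by
    obtain ⟨L, -, hperiod⟩ := AlmostPeriodic.exists_common_period H.almostPeriodic
      (ε := 1 / ((n : ℝ) + 1)) (by positivity)
    obtain ⟨s, hs, hper⟩ := hperiod n
    exact ⟨s, hs.1, hper⟩
  choose s hns hs using hperiod
  refine exists_entireSolN_of_approxSol hM hK ?_ ?_ fun n => hy.comp_add_const hM.le (hs n)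
  · simpa using tendsto_one_div_add_atTop_nhds_zero_nat.mul_const ((m + 2 + H.B * K) * K)
  · exact tendsto_atBot_add_const_left _ _ <| tendsto_neg_atTop_atBot.comp <|
      tendsto_atTop_mono hns tendsto_natCast_atTop_atTop

lemma almostPeriodic_of_entireSolN (H : StabilityConstants d a β c r) (hM : 0 < M) (hK : 0 < K)
    (hb : EntireSolN d a β c r b) (hmem : ∀ i t, b t i ∈ Icc M K) (i : Fin m) :
    AlmostPeriodic fun t => b t i := by
  refine ⟨continuous_iff_continuousAt.2 fun t => (hb i t).continuousAt, fun e he => ?_⟩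
  obtain ⟨ε, hε, T, -, hclose⟩ := H.exists_abs_sub_lt hM hK he
  have hC : 0 < (m + 2 + H.B * K) * K := by
    have hB := H.B_pos
    positivity
  obtain ⟨L, hL, hperiod⟩ := AlmostPeriodic.exists_common_period H.almostPeriodic (div_pos hε hC)
  refine ⟨L, hL, fun p => ?_⟩
  obtain ⟨s, hs, hper⟩ := hperiod p
  refine ⟨s, hs, fun t => ?_⟩
  have hshift := (H.approxSol_of_entireSolN hb hmem (t - T + s)).comp_add_const hM.le hper
  rw [div_mul_cancel₀ _ hC.ne', add_sub_cancel_right] at hshift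
  exact hclose _ _ _ _ _ hshift
    ((H.approxSol_of_entireSolN hb hmem (t - T)).weaken hε.le le_rfl le_rfl) t
    (sub_add_cancel t T).le i

lemma exists_abs_sub_lt_of_entireSolN (H : StabilityConstants d a β c r) {e : ℝ} (hM : 0 < M)
    (hK : 0 < K) (hb : EntireSolN d a β c r b) (hmem : ∀ i t, b t i ∈ Icc M K) (hM' : 0 < M')
    (K' : ℝ) (he : 0 < e) :
    ∃ T ≥ 0, ∀ y t₀, H.ApproxSol 0 M' K' t₀ y (fun t i => rhs d a β c r i t y) →
      ∀ t, t₀ + T ≤ t → ∀ i, |y t i - b t i| < e := by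
  obtain ⟨ε, hε, T, hT, hclose⟩ :=
    H.exists_abs_sub_lt (lt_min hM hM') (lt_max_of_lt_left hK : 0 < max K K') he
  exact ⟨T, hT, fun y t₀ hy => hclose _ _ _ _ t₀
    (hy.weaken hε.le (min_le_right _ _) (le_max_right _ _))
    ((H.approxSol_of_entireSolN hb hmem t₀).weaken hε.le (min_le_left _ _) (le_max_left _ _))⟩

lemma eq_of_entireSolN (H : StabilityConstants d a β c r) {b' : ℝ → Fin m → ℝ} (hM : 0 < M)
    (hK : 0 < K) (hb : EntireSolN d a β c r b) (hmem : ∀ i t, b t i ∈ Icc M K) (hM' : 0 < M')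
    (hb' : EntireSolN d a β c r b') (hmem' : ∀ i t, b' t i ∈ Icc M' K') : b' = b := by
  funext t i
  refine eq_of_forall_dist_le fun e he => ?_
  obtain ⟨T, -, hclose⟩ := H.exists_abs_sub_lt_of_entireSolN hM hK hb hmem hM' K' he
  exact (hclose b' (t - T) (H.approxSol_of_entireSolN hb' hmem' _) t (sub_add_cancel t T).le i).le

end StabilityConstants

end Attractor

theorem statement18_general
    {m : ℕ} {d : Fin m → ℝ → ℝ} {a : Fin m → Fin m → ℝ → ℝ} {β c : Fin m → ℝ → ℝ}
    {r : Fin m → ℝ} (hr : ∀ i, 0 < r i) (hA : Admissible d a β c)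
    (hcond : ∀ i, r i * supR (β i) * Real.exp (supR (d i) * r i) < Real.exp 1)
    (hpers : ∀ φ : XN m r, XPos φ → (∀ i, 0 < φ i (pt0N r hr i)) →
      ∀ y : ℝ → Fin m → ℝ, SolN d a β c r φ y →
        ∃ M > 0, ∃ t₀ : ℝ, ∀ t, t₀ ≤ t → ∀ i, M ≤ y t i) :
    ∃ b : ℝ → Fin m → ℝ,
      (∀ i, AlmostPeriodic (fun t => b t i)) ∧
      (∀ i, ∃ δ > 0, ∀ t, δ ≤ b t i) ∧
      EntireSolN d a β c r b ∧
      (∀ φ : XN m r, XPos φ → (∀ i, 0 < φ i (pt0N r hr i)) →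
        ∀ y : ℝ → Fin m → ℝ, SolN d a β c r φ y →
          ∀ ε > 0, ∃ T : ℝ, ∀ t, T ≤ t → ∀ i, ∀ s : Set.Icc (-(r i)) (0:ℝ),
            |y (t + (s : ℝ)) i - b (t + (s : ℝ)) i| < ε) ∧
      ∀ b' : ℝ → Fin m → ℝ,
        (∀ i, ∃ K, ∀ t, b' t i ≤ K) →
        (∀ i, ∃ δ > 0, ∀ t, δ ≤ b' t i) →
        EntireSolN d a β c r b' →
        b' = b := by
  obtain ⟨H⟩ := hA.nonempty_stabilityConstants hr hcond
  obtain ⟨y, hy⟩ := H.exists_solN_one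
  obtain ⟨M, hM, t₀, hlower⟩ := hpers _ (fun _ _ => zero_le_one) (fun _ => one_pos) y hy
  obtain ⟨t₁, K, hK, happrox⟩ := H.exists_approxSol_of_solN hy hM.le hlower
  obtain ⟨b, hb, hmem⟩ := happrox.exists_entireSolN hM hK
  refine ⟨b, H.almostPeriodic_of_entireSolN hM hK hb hmem,
    fun i => ⟨M, hM, fun t => (hmem i t).1⟩, hb, fun φ hφ hφ0 z hz ε hε => ?_,
    fun b' hupper hδ hb' => ?_⟩
  · obtain ⟨M', hM', s₀, hlower'⟩ := hpers φ hφ hφ0 z hz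
    obtain ⟨s₁, K', -, happrox'⟩ := H.exists_approxSol_of_solN hz hM'.le hlower'
    obtain ⟨T, -, hclose⟩ := H.exists_abs_sub_lt_of_entireSolN hM hK hb hmem hM' K' hε
    exact ⟨s₁ + T + H.R, fun t ht i s =>
      hclose z s₁ happrox' _ (by linarith [s.2.1, H.r_le i]) i⟩
  · choose δ hδpos hδle using hδ
    choose K' hK' using hupper
    obtain ⟨δ₀, hδ₀⟩ := Finite.exists_ge fun i => (⟨δ i, hδpos i⟩ : Ioi (0 : ℝ))
    obtain ⟨K₀, hK₀⟩ := Finite.exists_le K'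
    exact H.eq_of_entireSolN hM hK hb hmem δ₀.2 hb' fun i t =>
      ⟨le_trans (hδ₀ i) (hδle i t), (hK' i t).trans (hK₀ i)⟩

/-- under the strict condition `rᵢ βᵢ⁺ e^{dᵢ⁺ rᵢ} < e` and uniform
persistence at `0`, there is a unique strongly positive almost periodic entire solution
`b`, and it asymptotically attracts every solution with initial value `φ ∈ X₊`,
`φ(0) ≫ 0`. -/
theorem statement18
    {m : ℕ} (hm : 1 ≤ m)
    (d : Fin m → ℝ → ℝ) (a : Fin m → Fin m → ℝ → ℝ) (β c : Fin m → ℝ → ℝ)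
    (r : Fin m → ℝ) (hr : ∀ i, 0 < r i)
    (hN : NicholsonHyps m d a β c)
    (hcond : ∀ i, r i * supR (β i) * Real.exp (supR (d i) * r i) < Real.exp 1)
    (hpers : ∃ M : ℝ, 0 < M ∧
      ∀ φ : XN m r, XPos φ → (∀ i, 0 < φ i (pt0N r hr i)) →
        ∀ y : ℝ → Fin m → ℝ, SolN d a β c r φ y →
          ∃ t₀ : ℝ, ∀ t, t₀ ≤ t → ∀ i, M ≤ y t i) :
    ∃ b : ℝ → Fin m → ℝ,
      -- b is almost periodic, componentwise
      (∀ i, AlmostPeriodic (fun t => b t i)) ∧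
      -- b is bounded away from 0
      (∀ i, ∃ δ > 0, ∀ t, δ ≤ b t i) ∧
      -- b is an entire solution of the Nicholson system
      EntireSolN d a β c r b ∧
      -- b attracts every solution starting at φ ∈ X₊ with φ(0) ≫ 0
      (∀ φ : XN m r, XPos φ → (∀ i, 0 < φ i (pt0N r hr i)) →
        ∀ y : ℝ → Fin m → ℝ, SolN d a β c r φ y →
          ∀ ε > 0, ∃ T : ℝ, ∀ t, T ≤ t → ∀ i, ∀ s : Set.Icc (-(r i)) (0:ℝ),
            |y (t + (s : ℝ)) i - b (t + (s : ℝ)) i| < ε) ∧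
      -- b is the unique almost periodic entire solution bounded away from 0
      ∀ b' : ℝ → Fin m → ℝ,
        (∀ i, AlmostPeriodic (fun t => b' t i)) →
        (∀ i, ∃ δ > 0, ∀ t, δ ≤ b' t i) →
        EntireSolN d a β c r b' →
        b' = b := by
  obtain ⟨M, hM, hlower⟩ := hpers
  obtain ⟨b, hap, hpos, hb, hattract, hunique⟩ := statement18_general hr hN.admissible hcond
    fun φ hφ hφ0 y hy => ⟨M, hM, hlower φ hφ hφ0 y hy⟩
  refine ⟨b, hap, hpos, hb, hattract, fun b' hap' => hunique b' fun i => ?_⟩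
  obtain ⟨K, hK⟩ := (hap' i).exists_abs_le
  exact ⟨K, fun t => le_of_abs_le (hK t)⟩

end Nicholson
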